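/- Suppose that P is proper (every closed bounded subset of P is compact) and that Ω ⊆ P is open. Assume that ‖·‖_X is absolutely continuous and that ‖χ_E‖_X < ∞ for every measurable E ⊆ P with μ(E) < ∞. If locally Lipschitz functions are dense in N¹X, then the closure in the quasi-seminorm ‖·‖_{N¹X} of the set of Lipschitz functions with compact support contained in Ω equals {u ∈ N¹X : u = 0 on P ∖ Ω}. -/

import Mathlib

/-!
The closure of `Lip_c(Ω)` consists of the functions vanishing outside `Ω`, up to functions of zero
Newtonian quasi-seminorm.

*Limits vanish outside `Ω`.* Let `f n ∈ Lip_c(Ω)` converge to `u` so rapidly that `∑ |u - f n|` and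
`∑ g n` have finite quasi-norm, where `g n` is an upper gradient of `u - f n`. Where
`∑ |u - f n| < ∞`, the value of `u` is finite, and it is zero outside `Ω`. The remaining set `N` is
null, and a curve meeting its complement with `∫_γ ∑ g n < ∞` avoids it altogether. Hence
`∑ g n + ∞ · χ_N` is an upper gradient of `u - χ_Ω u`, whose norm is as small as desired
(`newt_sub_indicator_eq_zero`).

*Functions vanishing outside `Ω` are limits.* Truncation at levels `±n` (`approx_of_memN1`),
cutoffs of large balls (`approx_of_bounded`) and removal of the values below a threshold `e`
(`approx_of_bounded_support`) reduce the claim to the soft-thresholded function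
`q = b - max (-e) (min e b)`, with `b` bounded, of bounded support and zero outside `Ω`. In each
step the error has a gradient concentrated on sets decreasing to a null set, so that absolute
continuity of the quasi-norm makes it small; this uses locality of gradients of truncations
(`grad_clampE`) and the product rule (`grad_mul`).

The core is `approx_soft`. Let `f` be a Lipschitz function close to `b`. Were `|b - f| ≤ e / 4`
everywhere, `q` would vanish off the compact set `{|f| ≥ 3e/4} ⊆ Ω`. In general there is a function
`0 ≤ u ≤ 1`, small in `N¹X` and with *closed* sublevel sets, such that `|b - f| ≤ e / 4` on
`{u ≤ 1/2}`. Then `(1 - min 1 (2u)) q` is close to `q` and vanishes off the compact set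
`{u ≤ 1/2} ∩ {|f| ≥ 3e/4} ⊆ Ω`, whence multiplying locally Lipschitz approximants by a cutoff of
this compact set finishes the argument (`approx_of_compact`).

The function `u` comes from `exists_cap`. Majorize a multiple `z` of `b - f` and an upper gradient
of `z` by lower semicontinuous functions `h` and `ρ` of comparable norm (`exists_lsc`, a
Vitali–Carathéodory theorem in `X`), and let `u(x)` be the minimum of `1` and the infimum of
`h(y) + ∫_γ ρ ds` over all curves `γ` from `x` to some `y` (`pathInf`). By construction `ρ` is an
upper gradient of `u` and `min 1 |z| ≤ u ≤ h`. As `P` is proper, near-optimal curves subconverge by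
Arzelà–Ascoli, which gives the closedness of sublevel sets (`isClosed_pathInf_le`).
-/

open MeasureTheory Filter Set Topology Metric ENNReal
open scoped NNReal

noncomputable section

/-- A (non-constant, rectifiable) curve in `P`, parametrized by arc length. -/
structure Curve (P : Type*) [PseudoMetricSpace P] where
  len : ℝ
  len_pos : 0 < len
  toFun : ℝ → P
  lip : LipschitzOnWith 1 toFun (Set.Icc 0 len)

variable {P : Type*}

/-- The curve integral `∫_γ ρ ds`. -/
def curveLint [PseudoMetricSpace P] (γ : Curve P) (ρ : P → ℝ≥0∞) : ℝ≥0∞ :=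
  ∫⁻ t in Set.Icc (0 : ℝ) γ.len, ρ (γ.toFun t)

/-- `g` is an upper gradient of `u`. -/
def IsUpperGradient [PseudoMetricSpace P] [MeasurableSpace P]
    (u : P → EReal) (g : P → ℝ≥0∞) : Prop :=
  Measurable g ∧
    ∀ γ : Curve P, (u (γ.toFun 0) - u (γ.toFun γ.len)).abs ≤ curveLint γ g

/-- A quasi-Banach function lattice over `(P, μ)` with continuous quasi-norm. -/
structure QBFL (P : Type*) [MeasurableSpace P] (μ : MeasureTheory.Measure P) where
  nrm : (P → EReal) → ℝ≥0∞
  cc : ℝ≥0∞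
  one_le_cc : 1 ≤ cc
  cc_lt_top : cc < ⊤
  nrm_eq_zero_iff : ∀ u : P → EReal, Measurable u → (nrm u = 0 ↔ u =ᵐ[μ] 0)
  nrm_smul : ∀ (a : ℝ) (u : P → EReal),
    nrm (fun x => (a : EReal) * u x) = ENNReal.ofReal |a| * nrm u
  nrm_triangle : ∀ u v : P → EReal,
    nrm (fun x => u x + v x) ≤ cc * (nrm u + nrm v)
  nrm_mono : ∀ u v : P → EReal, (∀ᵐ x ∂μ, (u x).abs ≤ (v x).abs) → nrm u ≤ nrm v
  nrm_rieszFischer : ∀ f : ℕ → P → EReal, (∀ n, ∀ᵐ x ∂μ, 0 ≤ f n x) →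
    nrm (fun x => ∑' n, f n x) ≤ ∑' n, cc ^ (n + 1) * nrm (f n)
  nrm_continuous : ∀ (f : ℕ → P → EReal) (u : P → EReal),
    Tendsto (fun n => nrm fun x => f n x - u x) atTop (𝓝 0) →
    Tendsto (fun n => nrm (f n)) atTop (𝓝 (nrm u))

variable [MetricSpace P] [MeasurableSpace P] {μ : MeasureTheory.Measure P}

/-- The quasi-norm applied to a `ℝ≥0∞`-valued function. -/
def QBFL.nrmE (X : QBFL P μ) (g : P → ℝ≥0∞) : ℝ≥0∞ :=
  X.nrm fun x => (g x : EReal)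

/-- The Newtonian quasi-seminorm `‖u‖_{N¹X}`. -/
def QBFL.newt (X : QBFL P μ) (u : P → EReal) : ℝ≥0∞ :=
  X.nrm u + ⨅ g ∈ {g : P → ℝ≥0∞ | IsUpperGradient u g}, X.nrmE g

/-- Membership in the Newtonian space `N¹X`. -/
def QBFL.memN1 (X : QBFL P μ) (u : P → EReal) : Prop :=
  Measurable u ∧ X.newt u < ⊤

/-- The Sobolev capacity `C_X`. -/
def QBFL.cap (X : QBFL P μ) (E : Set P) : ℝ≥0∞ :=
  ⨅ u ∈ {u : P → EReal | X.memN1 u ∧ ∀ x ∈ E, 1 ≤ u x}, X.newt u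


/-- `‖·‖_X` is absolutely continuous. -/
def QBFL.HasACNorm (X : QBFL P μ) : Prop :=
  ∀ u : P → EReal, Measurable u → X.nrm u < ⊤ →
    ∀ E : ℕ → Set P, (∀ n, MeasurableSet (E n)) → Antitone E → μ (⋂ n, E n) = 0 →
      Tendsto (fun n => X.nrm ((E n).indicator u)) atTop (𝓝 0)

set_option linter.unusedSectionVars false

/-! ### The quasi-norm on nonnegative functions -/

lemma abs_coe_ennreal' (a : ℝ≥0∞) : (a : EReal).abs = a := by
  induction a with
  | top => rfl
  | coe a =>
    change ((a : ℝ) : EReal).abs = _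
    rw [EReal.abs_def, abs_of_nonneg a.coe_nonneg, ENNReal.ofReal_coe_nnreal]

lemma measurable_abs' : Measurable (EReal.abs : EReal → ℝ≥0∞) := by
  refine EReal.measurable_of_measurable_real ?_
  change Measurable fun x : ℝ => ENNReal.ofReal |x|
  fun_prop

lemma exists_small_mul {K ε : ℝ≥0∞} (hK : K ≠ ⊤) (hε : 0 < ε) :
    ∃ δ : ℝ≥0, 0 < δ ∧ K * δ < ε := by
  have h : Tendsto (fun δ : ℝ≥0 => K * (δ : ℝ≥0∞)) (𝓝[>] 0) (𝓝 (K * (0 : ℝ≥0))) :=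
    (ENNReal.Tendsto.const_mul (ENNReal.tendsto_coe.2 tendsto_id) (Or.inr hK)).mono_left
      nhdsWithin_le_nhds
  have h2 := h.eventually (gt_mem_nhds (by simpa using hε))
  obtain ⟨δ, h1, h3⟩ := (h2.and self_mem_nhdsWithin).exists
  exact ⟨δ, h3, h1⟩

namespace QBFL

variable (X : QBFL P μ)

lemma nrmE_mono_ae {f g : P → ℝ≥0∞} (h : ∀ᵐ x ∂μ, f x ≤ g x) : X.nrmE f ≤ X.nrmE g := by
  refine X.nrm_mono _ _ ?_
  simpa only [abs_coe_ennreal'] using h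

lemma nrmE_mono {f g : P → ℝ≥0∞} (h : ∀ x, f x ≤ g x) : X.nrmE f ≤ X.nrmE g :=
  X.nrmE_mono_ae (Eventually.of_forall h)

lemma nrm_eq (u : P → EReal) : X.nrm u = X.nrmE fun x => (u x).abs := by
  apply le_antisymm <;> exact X.nrm_mono _ _ (by simp [abs_coe_ennreal'])

lemma cc_ne : X.cc ≠ ⊤ := X.cc_lt_top.ne

lemma nrmE_add (f g : P → ℝ≥0∞) :
    X.nrmE (fun x => f x + g x) ≤ X.cc * (X.nrmE f + X.nrmE g) := by
  have := X.nrm_triangle (fun x => (f x : EReal)) (fun x => (g x : EReal))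
  simpa only [nrmE, EReal.coe_ennreal_add] using this

lemma nrmE_mul (a : ℝ≥0) (f : P → ℝ≥0∞) :
    X.nrmE (fun x => a * f x) = a * X.nrmE f := by
  have := X.nrm_smul (a : ℝ) (fun x => (f x : EReal))
  rw [abs_of_nonneg a.coe_nonneg, ENNReal.ofReal_coe_nnreal] at this
  rw [nrmE, nrmE, ← this]
  simp only [EReal.coe_ennreal_mul]
  rfl

lemma nrmE_eq_zero_iff {f : P → ℝ≥0∞} (hf : Measurable f) : X.nrmE f = 0 ↔ f =ᵐ[μ] 0 := by
  refine (X.nrm_eq_zero_iff _ (measurable_coe_ennreal_ereal.comp hf)).trans ?_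
  simp [Filter.EventuallyEq]

lemma nrmE_tsum (f : ℕ → P → ℝ≥0∞) :
    X.nrmE (fun x => ∑' n, f n x) ≤ ∑' n, X.cc ^ (n + 1) * X.nrmE (f n) := by
  have := X.nrm_rieszFischer (fun n x => (f n x : EReal))
    (fun n => Eventually.of_forall fun x => EReal.coe_ennreal_nonneg _)
  refine le_of_eq_of_le ?_ this
  refine congrArg X.nrm (funext fun x => ?_)
  have h : HasSum (fun n => f n x) (∑' n, f n x) := ENNReal.summable.hasSum
  let φ : ℝ≥0∞ →+ EReal :=
    { toFun := fun a => (a : EReal), map_zero' := by simp, map_add' := EReal.coe_ennreal_add }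
  exact (h.map φ continuous_coe_ennreal_ereal).tsum_eq.symm

lemma nrmE_zero : X.nrmE (fun _ => 0) = 0 := by
  rw [X.nrmE_eq_zero_iff measurable_const]; rfl

lemma nrmE_null {f : P → ℝ≥0∞} (hf : f =ᵐ[μ] 0) : X.nrmE f = 0 := by
  rw [← nonpos_iff_eq_zero, ← X.nrmE_zero]
  refine X.nrmE_mono_ae ?_
  filter_upwards [hf] with x hx
  simp [hx]

lemma ae_lt_top {f : P → ℝ≥0∞} (hf : Measurable f) (h : X.nrmE f < ⊤) : ∀ᵐ x ∂μ, f x < ⊤ := by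
  have hm : MeasurableSet {x | f x = ⊤} := hf (measurableSet_singleton _)
  set χ : P → ℝ≥0∞ := {x | f x = ⊤}.indicator 1 with hχ
  have hle : ∀ n : ℕ, (n : ℝ≥0∞) * X.nrmE χ ≤ X.nrmE f := by
    intro n
    have := X.nrmE_mul n χ
    rw [ENNReal.coe_natCast] at this
    rw [← this]
    refine X.nrmE_mono fun x => ?_
    by_cases hx : f x = ⊤ <;> simp [hχ, hx]
  have h0 : X.nrmE χ = 0 := by
    by_contra h0
    obtain ⟨n, hn⟩ := ENNReal.exists_nat_mul_gt h0 h.ne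
    exact absurd (hle n) (not_le.2 hn)
  rw [X.nrmE_eq_zero_iff (measurable_one.indicator hm)] at h0
  filter_upwards [h0] with x hx
  rw [lt_top_iff_ne_top]
  intro hx'
  simp [hx'] at hx

lemma tendsto_indicator (hAC : X.HasACNorm) {g : P → ℝ≥0∞} (hg : Measurable g)
    (hfin : X.nrmE g < ⊤) {E : ℕ → Set P} (hE : ∀ n, MeasurableSet (E n)) (hanti : Antitone E)
    (h0 : μ (⋂ n, E n) = 0) :
    Tendsto (fun n => X.nrmE ((E n).indicator g)) atTop (𝓝 0) := by
  have := hAC _ (measurable_coe_ennreal_ereal.comp hg) hfin E hE hanti h0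
  refine this.congr fun n => congrArg X.nrm (funext fun x => ?_)
  by_cases hx : x ∈ E n <;> simp [hx]

lemma exists_indicator_lt (hAC : X.HasACNorm) {g : P → ℝ≥0∞} (hg : Measurable g)
    (hfin : X.nrmE g < ⊤) {E : ℕ → Set P} (hE : ∀ n, MeasurableSet (E n)) (hanti : Antitone E)
    (h0 : μ (⋂ n, E n) = 0) {ε : ℝ≥0∞} (hε : 0 < ε) :
    ∀ᶠ n in atTop, X.nrmE ((E n).indicator g) < ε :=
  (X.tendsto_indicator hAC hg hfin hE hanti h0).eventually (gt_mem_nhds hε)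

/-- A summable weight sequence adapted to the Riesz–Fischer inequality. -/
lemma exists_weights {ε : ℝ≥0∞} (hε : 0 < ε) :
    ∃ d : ℕ → ℝ≥0, (∀ n, 0 < d n) ∧ ∑' n, X.cc ^ (n + 1) * (d n : ℝ≥0∞) < ε := by
  obtain ⟨ε', h1, h2⟩ := ENNReal.exists_pos_sum_of_countable hε.ne' ℕ
  have : ∀ n, ∃ δ : ℝ≥0, 0 < δ ∧ X.cc ^ (n + 1) * (δ : ℝ≥0∞) < ε' n := fun n =>
    exists_small_mul (ENNReal.pow_ne_top X.cc_ne) (by exact_mod_cast h1 n)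
  choose d hd hd' using this
  exact ⟨d, hd, lt_of_le_of_lt (ENNReal.tsum_le_tsum fun n => (hd' n).le) h2⟩

/-- Uniform form of absolute continuity: sets with small characteristic function (in norm)
carry a small part of the norm of `g`. -/
lemma exists_delta (hAC : X.HasACNorm) {g : P → ℝ≥0∞} (hg : Measurable g)
    (hfin : X.nrmE g < ⊤) {ε : ℝ≥0∞} (hε : 0 < ε) :
    ∃ δ : ℝ≥0, 0 < δ ∧ ∀ A : Set P, MeasurableSet A → X.nrmE (A.indicator 1) ≤ δ →
      X.nrmE (A.indicator g) < ε := by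
  by_contra! hcon
  obtain ⟨d, hd, hsum⟩ := X.exists_weights (ε := 1) one_pos
  have hcon' := fun n => hcon (d n) (hd n)
  choose A hAm hAd hAε using hcon'
  set B : ℕ → Set P := fun m => ⋃ n, A (n + m) with hB
  have hBm : ∀ m, MeasurableSet (B m) := fun m => MeasurableSet.iUnion fun n => hAm _
  have hBanti : Antitone B := by
    refine antitone_nat_of_succ_le fun m => ?_
    refine iUnion_subset fun n => ?_
    refine subset_iUnion_of_subset (n + 1) ?_
    rw [show n + 1 + m = n + (m + 1) by ring]
  have hBn : ∀ m, X.nrmE ((⋂ n, B n).indicator 1) ≤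
      ∑' n, X.cc ^ (n + m + 1) * (d (n + m) : ℝ≥0∞) := by
    intro m
    calc X.nrmE ((⋂ n, B n).indicator 1) ≤ X.nrmE (fun x => ∑' n, (A (n + m)).indicator 1 x) := by
          refine X.nrmE_mono fun x => ?_
          by_cases hx : x ∈ ⋂ n, B n
          · obtain ⟨n, hn⟩ := mem_iUnion.1 (mem_iInter.1 hx m)
            refine le_trans ?_ (ENNReal.le_tsum n)
            simp [hx, hn]
          · simp [indicator_of_notMem hx]
      _ ≤ ∑' n, X.cc ^ (n + 1) * X.nrmE ((A (n + m)).indicator 1) := X.nrmE_tsum _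
      _ ≤ _ := by
          refine ENNReal.tsum_le_tsum fun n => ?_
          gcongr
          · exact X.one_le_cc
          · omega
          · exact hAd _
  have hlim := ENNReal.tendsto_sum_nat_add (fun n => X.cc ^ (n + 1) * (d n : ℝ≥0∞))
    (hsum.trans one_lt_top).ne
  have h0 : X.nrmE ((⋂ n, B n).indicator 1) = 0 :=
    nonpos_iff_eq_zero.1 (ge_of_tendsto' hlim fun m => hBn m)
  have hmI : MeasurableSet (⋂ n, B n) := MeasurableSet.iInter hBm
  rw [X.nrmE_eq_zero_iff (measurable_one.indicator hmI), indicator_ae_eq_zero] at h0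
  have hμ : μ (⋂ n, B n) = 0 := by
    simpa [Function.support_one] using h0
  obtain ⟨n, hn⟩ := (X.exists_indicator_lt hAC hg hfin hBm hBanti hμ hε).exists
  refine absurd (hAε n) (not_le.2 (lt_of_le_of_lt (X.nrmE_mono fun x => ?_) hn))
  refine indicator_le_indicator_of_subset ?_ (fun _ => zero_le) x
  exact subset_iUnion_of_subset 0 (by rw [zero_add])

end QBFL

/-! ### Upper gradients along globally Lipschitz curves -/

lemma lintegral_Icc_add (F : ℝ → ℝ≥0∞) {a b c : ℝ} (hab : a ≤ b) (hbc : b ≤ c) :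
    ∫⁻ t in Icc a c, F t = (∫⁻ t in Icc a b, F t) + ∫⁻ t in Icc b c, F t := by
  rw [← restrict_Ioc_eq_restrict_Icc, ← restrict_Ioc_eq_restrict_Icc,
    ← restrict_Ioc_eq_restrict_Icc, ← Ioc_union_Ioc_eq_Ioc hab hbc,
    lintegral_union measurableSet_Ioc]
  rw [Set.disjoint_left]
  intro x hx hx'
  exact absurd hx.2 (not_le.2 hx'.1)

lemma lintegral_Icc_mono (F : ℝ → ℝ≥0∞) {a b s t : ℝ} (has : a ≤ s) (htb : t ≤ b) :
    ∫⁻ r in Icc s t, F r ≤ ∫⁻ r in Icc a b, F r :=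
  lintegral_mono_set (Icc_subset_Icc has htb)

lemma lintegral_Icc_shift (F : ℝ → ℝ≥0∞) (a b d : ℝ) :
    ∫⁻ t in Icc a b, F (t + d) = ∫⁻ t in Icc (a + d) (b + d), F t := by
  have h := (measurePreserving_add_right volume d).setLIntegral_comp_emb
    (measurableEmbedding_addRight d) F (Icc a b)
  rw [h]
  simp

lemma lintegral_Icc_reflect (F : ℝ → ℝ≥0∞) (a b d : ℝ) :
    ∫⁻ t in Icc a b, F (d - t) = ∫⁻ t in Icc (d - b) (d - a), F t := by
  have h := (Measure.measurePreserving_sub_left volume d).setLIntegral_comp_emb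
    (MeasurableEquiv.subLeft d).measurableEmbedding F (Icc a b)
  rw [h]
  simp

/-- Upper gradients may be tested on restrictions to intervals of 1-Lipschitz maps `ℝ → P`. -/
lemma isUpperGradient_iff {u : P → EReal} {g : P → ℝ≥0∞} :
    IsUpperGradient u g ↔ Measurable g ∧ ∀ c : ℝ → P, LipschitzWith 1 c → ∀ a b, a < b →
      (u (c a) - u (c b)).abs ≤ ∫⁻ t in Icc a b, g (c t) := by
  constructor
  · rintro ⟨hg, h⟩
    refine ⟨hg, fun c hc a b hab => ?_⟩
    have hl : LipschitzWith 1 fun t : ℝ => c (t + a) := by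
      intro s t
      have := hc (s + a) (t + a)
      rwa [edist_add_right] at this
    have := h ⟨b - a, sub_pos.2 hab, fun t => c (t + a), hl.lipschitzOnWith⟩
    simp only [curveLint, zero_add, sub_add_cancel] at this
    rwa [lintegral_Icc_shift (fun t => g (c t)), zero_add, sub_add_cancel] at this
  · rintro ⟨hg, h⟩
    refine ⟨hg, fun γ => ?_⟩
    have h0 := γ.len_pos.le
    set c : ℝ → P := fun t => γ.toFun (projIcc 0 γ.len h0 t) with hc
    have hcl : LipschitzWith 1 c := by
      intro s t
      refine (γ.lip (projIcc 0 γ.len h0 s).2 (projIcc 0 γ.len h0 t).2).trans ?_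
      have := (LipschitzWith.projIcc h0) s t
      simp only [ENNReal.coe_one, one_mul] at this ⊢
      exact this
    have hce : ∀ t ∈ Icc 0 γ.len, c t = γ.toFun t := by
      intro t ht
      simp only [hc, projIcc_of_mem h0 ht]
    have := h c hcl 0 γ.len γ.len_pos
    rw [hce 0 ⟨le_rfl, h0⟩, hce γ.len ⟨h0, le_rfl⟩] at this
    refine this.trans_eq (setLIntegral_congr_fun measurableSet_Icc fun t ht => ?_)
    simp only [hce t ht]

/-- Absolute continuity of the integral, uniformly over short intervals. -/
lemma lintegral_small {G : ℝ → ℝ≥0∞} {a b : ℝ} (h : ∫⁻ t in Icc a b, G t ≠ ⊤) {τ : ℝ≥0∞}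
    (hτ : 0 < τ) : ∃ δ > 0, ∀ s t : ℝ, a ≤ s → t ≤ b → t - s ≤ δ → ∫⁻ r in Icc s t, G r < τ := by
  obtain ⟨δ, hδ, hs⟩ := exists_pos_setLIntegral_lt_of_measure_lt h hτ.ne'
  obtain ⟨δ', hδ', hδ'2⟩ := ENNReal.lt_iff_exists_nnreal_btwn.1 hδ
  refine ⟨δ', by exact_mod_cast hδ', fun s t has htb hst => ?_⟩
  have h1 := hs (Icc s t) (by
    refine lt_of_le_of_lt (Measure.restrict_apply_le _ _) (lt_of_le_of_lt ?_ hδ'2)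
    rw [Real.volume_Icc]
    exact (ENNReal.ofReal_le_ofReal hst).trans_eq (ENNReal.ofReal_coe_nnreal))
  rwa [Measure.restrict_restrict measurableSet_Icc,
    inter_eq_self_of_subset_left (Icc_subset_Icc has htb)] at h1

/-- A gradient inequality on all short intervals extends to long intervals. -/
lemma local_to_global {F : ℝ → ℝ} {G : ℝ → ℝ≥0∞} {a b δ : ℝ} (hδ : 0 < δ) (hab : a ≤ b)
    (h : ∀ s t, a ≤ s → s ≤ t → t ≤ b → t - s ≤ δ →
      ENNReal.ofReal |F s - F t| ≤ ∫⁻ r in Icc s t, G r) :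
    ENNReal.ofReal |F a - F b| ≤ ∫⁻ r in Icc a b, G r := by
  have key : ∀ n : ℕ, ∀ t, a ≤ t → t ≤ b → t - a ≤ n * δ →
      ENNReal.ofReal |F a - F t| ≤ ∫⁻ r in Icc a t, G r := by
    intro n
    induction n with
    | zero =>
      intro t hat htb ht
      have : t = a := by simp at ht; linarith
      simp [this]
    | succ n ih =>
      intro t hat htb ht
      push_cast at ht
      set s := max a (t - δ) with hs
      have h1 : a ≤ s := le_max_left _ _
      have h2 : s ≤ t := max_le hat (by linarith)
      have h3 : t - s ≤ δ := by have := le_max_right a (t - δ); linarith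
      have h4 : s - a ≤ n * δ := by
        rw [sub_le_iff_le_add]
        refine max_le ?_ (by linarith)
        have : (0 : ℝ) ≤ n * δ := by positivity
        linarith
      rw [lintegral_Icc_add G h1 h2]
      refine le_trans ?_ (add_le_add (ih s h1 (h2.trans htb) h4) (h s t h1 h2 htb h3))
      rw [← ENNReal.ofReal_add (abs_nonneg _) (abs_nonneg _)]
      exact ENNReal.ofReal_le_ofReal (abs_sub_le _ _ _)
  obtain ⟨n, hn⟩ := exists_nat_ge ((b - a) / δ)
  exact key n b hab le_rfl ((div_le_iff₀ hδ).1 hn)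

/-- A continuous function rising from `p` to `q` does so on a subinterval inside which it stays
strictly between these two values. -/
lemma crossing_up {φ : ℝ → ℝ} {a b p q : ℝ} (hab : a ≤ b) (hφ : ContinuousOn φ (Icc a b))
    (hpq : p < q) (ha : φ a ≤ p) (hb : q ≤ φ b) :
    ∃ s t, a ≤ s ∧ s < t ∧ t ≤ b ∧ q - p ≤ |φ s - φ t| ∧ ∀ r ∈ Ioo s t, φ r ∈ Ioo p q := by
  have hT : IsCompact (Icc a b ∩ φ ⁻¹' Ici q) :=
    isCompact_Icc.of_isClosed_subset (hφ.preimage_isClosed_of_isClosed isClosed_Icc isClosed_Ici)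
      inter_subset_left
  obtain ⟨t, ⟨htI, htq⟩, htmin⟩ := hT.exists_isLeast ⟨b, ⟨hab, le_rfl⟩, hb⟩
  have hφ' : ContinuousOn φ (Icc a t) := hφ.mono (Icc_subset_Icc_right htI.2)
  have hS : IsCompact (Icc a t ∩ φ ⁻¹' Iic p) :=
    isCompact_Icc.of_isClosed_subset (hφ'.preimage_isClosed_of_isClosed isClosed_Icc isClosed_Iic)
      inter_subset_left
  obtain ⟨s, ⟨hsI, hsp⟩, hsmax⟩ := hS.exists_isGreatest ⟨a, ⟨le_rfl, htI.1⟩, ha⟩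
  simp only [mem_preimage, mem_Ici, mem_Iic] at htq hsp
  have hst : s < t := by
    refine lt_of_le_of_ne hsI.2 fun h => ?_
    rw [h] at hsp; linarith
  refine ⟨s, t, hsI.1, hst, htI.2, ?_, fun r hr => ⟨?_, ?_⟩⟩
  · rw [abs_sub_comm]
    exact le_trans (by linarith) (le_abs_self _)
  · by_contra! hr'
    exact absurd (hsmax ⟨⟨hsI.1.trans hr.1.le, hr.2.le⟩, hr'⟩) (not_le.2 hr.1)
  · by_contra! hr'
    exact absurd (htmin ⟨⟨hsI.1.trans hr.1.le, hr.2.le.trans htI.2⟩, hr'⟩) (not_le.2 hr.2)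

lemma crossing {φ : ℝ → ℝ} {a b p q : ℝ} (hab : a ≤ b) (hφ : ContinuousOn φ (Icc a b))
    (hpq : p < q) (h : (φ a ≤ p ∧ q ≤ φ b) ∨ (φ b ≤ p ∧ q ≤ φ a)) :
    ∃ s t, a ≤ s ∧ s < t ∧ t ≤ b ∧ q - p ≤ |φ s - φ t| ∧ ∀ r ∈ Ioo s t, φ r ∈ Ioo p q := by
  rcases h with h | h
  · exact crossing_up hab hφ hpq h.1 h.2
  · obtain ⟨s, t, h1, h2, h3, h4, h5⟩ := crossing_up (φ := fun r => -φ r) hab hφ.neg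
      (neg_lt_neg hpq) (neg_le_neg h.2) (neg_le_neg h.1)
    refine ⟨s, t, h1, h2, h3, ?_, fun r hr => ?_⟩
    · rw [show φ s - φ t = -(-φ s - -φ t) by ring, abs_neg]
      linarith
    · have := h5 r hr
      exact ⟨neg_lt_neg_iff.1 this.2, neg_lt_neg_iff.1 this.1⟩

/-- Truncation of extended reals to the interval `[α, β]`. -/
def clampE (α β : EReal) (y : EReal) : EReal := max α (min β y)

lemma clampE_cross {α β y y' : EReal} (hlt : clampE α β y < clampE α β y') :
    y ≤ clampE α β y ∧ clampE α β y' ≤ y' ∧ α ≤ clampE α β y ∧ clampE α β y' ≤ β := by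
  unfold clampE at *
  grind

lemma clampE_real {α β : EReal} (hα : α ≠ ⊤) (hβ : β ≠ ⊥) (y : ℝ) :
    ∃ p : ℝ, clampE α β y = p := by
  refine ⟨(clampE α β y).toReal, (EReal.coe_toReal ?_ ?_).symm⟩
  · exact (max_lt (lt_top_iff_ne_top.2 hα) (lt_of_le_of_lt (min_le_right _ _)
      (EReal.coe_lt_top y))).ne
  · exact ne_of_gt (lt_of_lt_of_le (lt_min (bot_lt_iff_ne_bot.2 hβ) (EReal.bot_lt_coe y))
      (le_max_right _ _))

/-- Along a curve of finite gradient integral the function is finite and continuous. -/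
lemma curve_real {v : P → EReal} {g : P → ℝ≥0∞} (hg : IsUpperGradient v g) {c : ℝ → P}
    (hc : LipschitzWith 1 c) {a b : ℝ} (hab : a < b)
    (hfin : ∫⁻ t in Icc a b, g (c t) ≠ ⊤) :
    ∃ φ : ℝ → ℝ, (∀ t ∈ Icc a b, v (c t) = φ t) ∧ ContinuousOn φ (Icc a b) ∧
      ∀ s t, a ≤ s → s ≤ t → t ≤ b →
        ENNReal.ofReal |φ s - φ t| ≤ ∫⁻ r in Icc s t, g (c r) := by
  have hug := (isUpperGradient_iff.1 hg).2 c hc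
  have hreal : ∀ s t, s ∈ Icc a b → t ∈ Icc a b → s < t →
      (∃ y : ℝ, v (c s) = y) ∧ (∃ y : ℝ, v (c t) = y) := by
    intro s t hs ht hst
    have h1 : (v (c s) - v (c t)).abs < ⊤ :=
      lt_of_le_of_lt ((hug s t hst).trans (lintegral_Icc_mono _ hs.1 ht.2)) hfin.lt_top
    generalize v (c s) = y at *
    generalize v (c t) = z at *
    induction y <;> induction z <;> simp_all
  have hfin' : ∀ t ∈ Icc a b, v (c t) = ((v (c t)).toReal : EReal) := by
    intro t ht
    obtain ⟨y, hy⟩ : ∃ y : ℝ, v (c t) = y := by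
      rcases eq_or_lt_of_le ht.1 with h | h
      · rw [← h]; exact (hreal a b ⟨le_rfl, hab.le⟩ ⟨hab.le, le_rfl⟩ hab).1
      · exact (hreal a t ⟨le_rfl, hab.le⟩ ht h).2
    rw [hy, EReal.toReal_coe]
  have hest : ∀ s t, a ≤ s → s ≤ t → t ≤ b →
      ENNReal.ofReal |(v (c s)).toReal - (v (c t)).toReal| ≤ ∫⁻ r in Icc s t, g (c r) := by
    intro s t has hst htb
    rcases eq_or_lt_of_le hst with h | h
    · simp [h]
    · have := hug s t h
      rw [hfin' s ⟨has, hst.trans htb⟩, hfin' t ⟨has.trans hst, htb⟩, ← EReal.coe_sub,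
        EReal.abs_def] at this
      exact this
  refine ⟨fun t => (v (c t)).toReal, hfin', ?_, hest⟩
  rw [Metric.continuousOn_iff]
  intro t ht ε hε
  obtain ⟨δ, hδ, hs⟩ := lintegral_small hfin (ENNReal.ofReal_pos.2 hε)
  refine ⟨δ, hδ, fun s hs' hst => ?_⟩
  rw [Real.dist_eq] at hst ⊢
  have := abs_lt.1 hst
  rw [← ENNReal.ofReal_lt_ofReal_iff hε]
  rcases le_total s t with h | h
  · exact lt_of_le_of_lt (hest s t hs'.1 h ht.2) (hs s t hs'.1 ht.2 (by linarith))
  · rw [abs_sub_comm]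
    exact lt_of_le_of_lt (hest t s ht.1 h hs'.2) (hs t s ht.1 hs'.2 (by linarith))

/-- Locality: only the part of the curve where `α < v < β` contributes to the variation of the
truncation of `v` to `[α, β]`. -/
lemma clampE_curve {v : P → EReal} {g : P → ℝ≥0∞} (hg : IsUpperGradient v g) {c : ℝ → P}
    (hc : LipschitzWith 1 c) {a b : ℝ} (hab : a < b)
    (hfin : ∫⁻ t in Icc a b, g (c t) ≠ ⊤) {α β : EReal} (hα : α ≠ ⊤) (hβ : β ≠ ⊥) :
    (clampE α β (v (c a)) - clampE α β (v (c b))).abs ≤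
      ∫⁻ t in Icc a b, {x | α < v x ∧ v x < β}.indicator g (c t) := by
  obtain ⟨φ, hφ, hcont, hest⟩ := curve_real hg hc hab hfin
  have ha : v (c a) = φ a := hφ a ⟨le_rfl, hab.le⟩
  have hb : v (c b) = φ b := hφ b ⟨hab.le, le_rfl⟩
  rw [ha, hb]
  obtain ⟨p, hp⟩ := clampE_real hα hβ (φ a)
  obtain ⟨q, hq⟩ := clampE_real hα hβ (φ b)
  have key : ∀ p q : ℝ, p < q → α ≤ p → (q : EReal) ≤ β →
      ((φ a ≤ p ∧ q ≤ φ b) ∨ (φ b ≤ p ∧ q ≤ φ a)) → ENNReal.ofReal (q - p) ≤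
      ∫⁻ t in Icc a b, {x | α < v x ∧ v x < β}.indicator g (c t) := by
    intro p q hpq hαp hqβ hor
    obtain ⟨s, t, has, hst, htb, hqp, hr⟩ := crossing hab.le hcont hpq hor
    calc ENNReal.ofReal (q - p) ≤ ENNReal.ofReal |φ s - φ t| := ENNReal.ofReal_le_ofReal hqp
      _ ≤ ∫⁻ r in Icc s t, g (c r) := hest s t has hst.le htb
      _ = ∫⁻ r in Ioo s t, g (c r) := by rw [restrict_Ioo_eq_restrict_Icc]
      _ = ∫⁻ r in Ioo s t, {x | α < v x ∧ v x < β}.indicator g (c r) := by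
          refine setLIntegral_congr_fun measurableSet_Ioo fun r hr' => ?_
          have h1 := hr r hr'
          have h2 := hφ r ⟨has.trans hr'.1.le, hr'.2.le.trans htb⟩
          rw [indicator_of_mem]
          rw [mem_ofPred_eq, h2]
          exact ⟨lt_of_le_of_lt hαp (EReal.coe_lt_coe_iff.2 h1.1),
            lt_of_lt_of_le (EReal.coe_lt_coe_iff.2 h1.2) hqβ⟩
      _ ≤ _ := lintegral_mono_set (Ioo_subset_Icc_self.trans (Icc_subset_Icc has htb))
  rw [hp, hq, ← EReal.coe_sub, EReal.abs_def]
  rcases lt_trichotomy p q with h | h | h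
  · have hx := clampE_cross (α := α) (β := β) (y := φ a) (y' := φ b)
      (by rw [hp, hq]; exact_mod_cast h)
    rw [hp, hq] at hx
    rw [abs_sub_comm, abs_of_pos (sub_pos.2 h)]
    exact key p q h hx.2.2.1 hx.2.2.2
      (Or.inl ⟨by exact_mod_cast hx.1, by exact_mod_cast hx.2.1⟩)
  · simp [h]
  · have hx := clampE_cross (α := α) (β := β) (y := φ b) (y' := φ a)
      (by rw [hp, hq]; exact_mod_cast h)
    rw [hp, hq] at hx
    rw [abs_of_pos (sub_pos.2 h)]
    exact key q p h hx.2.2.1 hx.2.2.2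
      (Or.inr ⟨by exact_mod_cast hx.1, by exact_mod_cast hx.2.1⟩)

/-! ### The gradient part of the Newtonian quasi-seminorm -/

lemma measurable_curve [BorelSpace P] {c : ℝ → P} (hc : LipschitzWith 1 c) {g : P → ℝ≥0∞}
    (hg : Measurable g) : Measurable fun t => g (c t) :=
  hg.comp hc.continuous.measurable

lemma IsUpperGradient.add [BorelSpace P] {w w₁ w₂ : P → EReal} {g₁ g₂ : P → ℝ≥0∞}
    (h₁ : IsUpperGradient w₁ g₁) (h₂ : IsUpperGradient w₂ g₂)
    (h : ∀ x y, (w x - w y).abs ≤ (w₁ x - w₁ y).abs + (w₂ x - w₂ y).abs) :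
    IsUpperGradient w fun x => g₁ x + g₂ x := by
  rw [isUpperGradient_iff] at *
  refine ⟨h₁.1.add h₂.1, fun c hc a b hab => ?_⟩
  rw [lintegral_add_left (measurable_curve hc h₁.1)]
  exact (h _ _).trans (add_le_add (h₁.2 c hc a b hab) (h₂.2 c hc a b hab))

/-- Product rule. The summands `τ * g` make the inequality trivial along curves of infinite
gradient integral, so that no exceptional family of curves is needed. -/
lemma IsUpperGradient.mul [BorelSpace P] {η z : P → ℝ} {gη gz : P → ℝ≥0∞}
    (hη : Measurable η) (hz : Measurable z)
    (h₁ : IsUpperGradient (fun x => (η x : EReal)) gη)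
    (h₂ : IsUpperGradient (fun x => (z x : EReal)) gz) {τ : ℝ≥0} (hτ : 0 < τ) :
    IsUpperGradient (fun x => ((η x * z x : ℝ) : EReal)) fun x =>
      (ENNReal.ofReal |η x| * gz x + ENNReal.ofReal |z x| * gη x) + τ * (gz x + gη x) := by
  have hgη := h₁.1
  have hgz := h₂.1
  rw [isUpperGradient_iff]
  refine ⟨by fun_prop, fun c hc a b hab => ?_⟩
  set G : ℝ → ℝ≥0∞ := fun t => (ENNReal.ofReal |η (c t)| * gz (c t) +
    ENNReal.ofReal |z (c t)| * gη (c t)) + τ * (gz (c t) + gη (c t)) with hG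
  have hle : ∀ f : P → ℝ≥0∞, Measurable f → (∀ x, f x ≤ gz x + gη x) →
      (∫⁻ t in Icc a b, f (c t)) = ⊤ → ∫⁻ t in Icc a b, G t = ⊤ := by
    intro f hf hle hinf
    rw [← top_le_iff]
    calc ⊤ = τ * ∫⁻ t in Icc a b, f (c t) := by
          rw [hinf, ENNReal.mul_top (by exact_mod_cast hτ.ne')]
      _ = ∫⁻ t in Icc a b, τ * f (c t) := (lintegral_const_mul _ (measurable_curve hc hf)).symm
      _ ≤ _ := by
          refine lintegral_mono fun t => ?_
          refine le_trans ?_ le_add_self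
          gcongr
          exact hle _
  by_cases hz_top : (∫⁻ t in Icc a b, gz (c t)) = ⊤
  · rw [hle gz hgz (fun x => le_self_add) hz_top]; exact le_top
  by_cases hη_top : (∫⁻ t in Icc a b, gη (c t)) = ⊤
  · rw [hle gη hgη (fun x => le_add_self) hη_top]; exact le_top
  obtain ⟨φz, hφz, -, hestz⟩ := curve_real h₂ hc hab hz_top
  obtain ⟨φη, hφη, -, hestη⟩ := curve_real h₁ hc hab hη_top
  have hφz' : ∀ t, a ≤ t → t ≤ b → φz t = z (c t) := fun t h h' =>
    (EReal.coe_eq_coe_iff.1 (hφz t ⟨h, h'⟩)).symm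
  have hφη' : ∀ t, a ≤ t → t ≤ b → φη t = η (c t) := fun t h h' =>
    (EReal.coe_eq_coe_iff.1 (hφη t ⟨h, h'⟩)).symm
  obtain ⟨δ₁, hδ₁, hs₁⟩ := lintegral_small hz_top (τ := τ) (by exact_mod_cast hτ)
  obtain ⟨δ₂, hδ₂, hs₂⟩ := lintegral_small hη_top (τ := τ) (by exact_mod_cast hτ)
  rw [← EReal.coe_sub, EReal.abs_def]
  refine local_to_global (F := fun t => η (c t) * z (c t)) (lt_min hδ₁ hδ₂) hab.le ?_
  intro s t has hst htb htδ
  have ez := hestz s t has hst htb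
  have eη := hestη s t has hst htb
  rw [hφz' s has (hst.trans htb), hφz' t (has.trans hst) htb] at ez
  rw [hφη' s has (hst.trans htb), hφη' t (has.trans hst) htb] at eη
  -- on a short interval `|η|` and `|z|` vary by at most `τ`
  have oscη : ∀ r ∈ Icc s t, ENNReal.ofReal |η (c s)| ≤ ENNReal.ofReal |η (c r)| + τ := by
    intro r hr
    have h := (hestη s r has hr.1 (hr.2.trans htb)).trans
      (hs₂ s r has (hr.2.trans htb) (by have := min_le_right δ₁ δ₂; linarith [hr.2])).le
    rw [hφη' s has (hst.trans htb), hφη' r (has.trans hr.1) (hr.2.trans htb)] at h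
    refine le_trans ?_ (add_le_add_right h _)
    rw [← ENNReal.ofReal_add (abs_nonneg _) (abs_nonneg _)]
    refine ENNReal.ofReal_le_ofReal ?_
    have := abs_add_le (η (c r)) (η (c s) - η (c r))
    simpa using this
  have oscz : ∀ r ∈ Icc s t, ENNReal.ofReal |z (c t)| ≤ ENNReal.ofReal |z (c r)| + τ := by
    intro r hr
    have h := (hestz r t (has.trans hr.1) hr.2 htb).trans
      (hs₁ r t (has.trans hr.1) htb (by have := min_le_left δ₁ δ₂; linarith [hr.1])).le
    rw [hφz' t (has.trans hst) htb, hφz' r (has.trans hr.1) (hr.2.trans htb)] at h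
    refine le_trans ?_ (add_le_add_right h _)
    rw [← ENNReal.ofReal_add (abs_nonneg _) (abs_nonneg _)]
    refine ENNReal.ofReal_le_ofReal ?_
    have := abs_sub (z (c r)) (z (c r) - z (c t))
    simpa using this
  calc ENNReal.ofReal |η (c s) * z (c s) - η (c t) * z (c t)|
      ≤ ENNReal.ofReal |η (c s)| * ENNReal.ofReal |z (c s) - z (c t)| +
        ENNReal.ofReal |z (c t)| * ENNReal.ofReal |η (c s) - η (c t)| := by
        rw [← ENNReal.ofReal_mul (abs_nonneg _), ← ENNReal.ofReal_mul (abs_nonneg _),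
          ← ENNReal.ofReal_add (by positivity) (by positivity), ← abs_mul, ← abs_mul]
        refine ENNReal.ofReal_le_ofReal ?_
        refine le_trans (le_of_eq ?_) (abs_add_le _ _)
        congr 1; ring
    _ ≤ ENNReal.ofReal |η (c s)| * (∫⁻ r in Icc s t, gz (c r)) +
        ENNReal.ofReal |z (c t)| * (∫⁻ r in Icc s t, gη (c r)) := by gcongr
    _ = ∫⁻ r in Icc s t, (ENNReal.ofReal |η (c s)| * gz (c r) +
          ENNReal.ofReal |z (c t)| * gη (c r)) := by
        have m1 := measurable_curve hc hgz
        have m2 := measurable_curve hc hgη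
        rw [lintegral_add_left (m1.const_mul _), lintegral_const_mul _ m1,
          lintegral_const_mul _ m2]
    _ ≤ ∫⁻ r in Icc s t, G r := by
        refine setLIntegral_mono' measurableSet_Icc fun r hr => ?_
        calc _ ≤ (ENNReal.ofReal |η (c r)| + τ) * gz (c r) +
              (ENNReal.ofReal |z (c r)| + τ) * gη (c r) := by
              gcongr
              · exact oscη r hr
              · exact oscz r hr
          _ = _ := by simp only [hG]; ring

namespace QBFL

variable (X : QBFL P μ)

/-- The gradient part of the Newtonian quasi-seminorm. -/
def grad (u : P → EReal) : ℝ≥0∞ := ⨅ g ∈ {g : P → ℝ≥0∞ | IsUpperGradient u g}, X.nrmE g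

lemma newt_eq (u : P → EReal) : X.newt u = X.nrmE (fun x => (u x).abs) + X.grad u := by
  rw [← X.nrm_eq]; rfl

lemma grad_le {u : P → EReal} {g : P → ℝ≥0∞} (h : IsUpperGradient u g) :
    X.grad u ≤ X.nrmE g := iInf₂_le g h

lemma exists_of_grad_lt {u : P → EReal} {t : ℝ≥0∞} (h : X.grad u < t) :
    ∃ g, IsUpperGradient u g ∧ X.nrmE g < t := by
  simpa [grad, iInf_lt_iff] using h

lemma grad_le_newt (u : P → EReal) : X.grad u ≤ X.newt u := le_add_self

lemma nrmE_le_newt (u : P → EReal) : X.nrmE (fun x => (u x).abs) ≤ X.newt u := by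
  rw [newt_eq]; exact le_self_add

lemma grad_triangle [BorelSpace P] {w w₁ w₂ : P → EReal}
    (h : ∀ x y, (w x - w y).abs ≤ (w₁ x - w₁ y).abs + (w₂ x - w₂ y).abs) :
    X.grad w ≤ X.cc * (X.grad w₁ + X.grad w₂) := by
  have hcc : X.cc ≠ 0 := (lt_of_lt_of_le one_pos X.one_le_cc).ne'
  by_cases h1 : X.grad w₁ = ⊤
  · simp [h1, ENNReal.mul_top hcc]
  by_cases h2 : X.grad w₂ = ⊤
  · simp [h2, ENNReal.mul_top hcc]
  refine ENNReal.le_of_forall_pos_le_add fun ε hε _ => ?_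
  obtain ⟨δ, hδ, hδ'⟩ := exists_small_mul (K := X.cc * 2) (ε := ε)
    (ENNReal.mul_ne_top X.cc_ne (by simp)) (by exact_mod_cast hε)
  have hδ0 : (δ : ℝ≥0∞) ≠ 0 := by exact_mod_cast hδ.ne'
  obtain ⟨g₁, hg₁, hn₁⟩ := X.exists_of_grad_lt (ENNReal.lt_add_right h1 hδ0)
  obtain ⟨g₂, hg₂, hn₂⟩ := X.exists_of_grad_lt (ENNReal.lt_add_right h2 hδ0)
  calc X.grad w ≤ X.cc * (X.nrmE g₁ + X.nrmE g₂) :=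
        (X.grad_le (hg₁.add hg₂ h)).trans (X.nrmE_add _ _)
    _ ≤ X.cc * ((X.grad w₁ + δ) + (X.grad w₂ + δ)) := by gcongr
    _ = X.cc * (X.grad w₁ + X.grad w₂) + X.cc * 2 * δ := by ring
    _ ≤ _ := by gcongr

lemma newt_triangle [BorelSpace P] {w w₁ w₂ : P → EReal}
    (h0 : ∀ x, (w x).abs ≤ (w₁ x).abs + (w₂ x).abs)
    (h : ∀ x y, (w x - w y).abs ≤ (w₁ x - w₁ y).abs + (w₂ x - w₂ y).abs) :
    X.newt w ≤ X.cc * (X.newt w₁ + X.newt w₂) := by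
  simp only [newt_eq]
  calc _ ≤ X.cc * (X.nrmE (fun x => (w₁ x).abs) + X.nrmE (fun x => (w₂ x).abs)) +
        X.cc * (X.grad w₁ + X.grad w₂) :=
        add_le_add ((X.nrmE_mono h0).trans (X.nrmE_add _ _)) (X.grad_triangle h)
    _ = _ := by ring

/-- If `g + τ k` is an upper gradient for all `τ > 0`, then `g` controls the gradient part. -/
lemma grad_le_of_perturb {u : P → EReal} {g k : P → ℝ≥0∞} (hk : X.nrmE k < ⊤)
    (h : ∀ τ : ℝ≥0, 0 < τ → IsUpperGradient u fun x => g x + τ * k x) :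
    X.grad u ≤ X.cc * X.nrmE g := by
  have h1 : ∀ τ : ℝ≥0, 0 < τ → X.grad u ≤ X.cc * (X.nrmE g + τ * X.nrmE k) := by
    intro τ hτ
    refine (X.grad_le (h τ hτ)).trans ((X.nrmE_add _ _).trans ?_)
    rw [X.nrmE_mul]
  refine ENNReal.le_of_forall_pos_le_add fun ε hε _ => ?_
  obtain ⟨δ, hδ, hδ'⟩ := exists_small_mul (K := X.cc * X.nrmE k) (ε := ε)
    (ENNReal.mul_ne_top X.cc_ne hk.ne) (by exact_mod_cast hε)
  refine (h1 δ hδ).trans ?_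
  rw [mul_add]
  gcongr
  refine le_trans (le_of_eq ?_) hδ'.le
  ring

/-- Locality: the gradient of the truncation of `v` to `[α, β]` lives on `{α < v < β}`. -/
lemma grad_clampE [BorelSpace P] {v : P → EReal} (hv : Measurable v) {g : P → ℝ≥0∞}
    (hg : IsUpperGradient v g) (hfin : X.nrmE g < ⊤) {α β : EReal} (hα : α ≠ ⊤) (hβ : β ≠ ⊥) :
    X.grad (fun x => clampE α β (v x)) ≤
      X.cc * X.nrmE ({x | α < v x ∧ v x < β}.indicator g) := by
  refine X.grad_le_of_perturb hfin fun τ hτ => ?_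
  have hm : MeasurableSet {x | α < v x ∧ v x < β} :=
    (measurableSet_lt measurable_const hv).inter (measurableSet_lt hv measurable_const)
  have hgm := hg.1
  have hi : Measurable ({x | α < v x ∧ v x < β}.indicator g) := hgm.indicator hm
  rw [isUpperGradient_iff]
  refine ⟨hi.add (hgm.const_mul _), fun c hc a b hab => ?_⟩
  rw [lintegral_add_left (measurable_curve hc hi),
    lintegral_const_mul _ (measurable_curve hc hgm)]
  by_cases h : (∫⁻ t in Icc a b, g (c t)) = ⊤
  · rw [h, ENNReal.mul_top (by exact_mod_cast hτ.ne')]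
    simp
  · exact (clampE_curve hg hc hab h hα hβ).trans le_self_add

/-- Product rule. The perturbation needed in `IsUpperGradient.mul` disappears in the infimum over
upper gradients. -/
lemma grad_mul [BorelSpace P] {η z : P → ℝ} {gη gz : P → ℝ≥0∞}
    (hη : Measurable η) (hz : Measurable z)
    (h₁ : IsUpperGradient (fun x => (η x : EReal)) gη)
    (h₂ : IsUpperGradient (fun x => (z x : EReal)) gz)
    (hf₁ : X.nrmE gη < ⊤) (hf₂ : X.nrmE gz < ⊤) :
    X.grad (fun x => ((η x * z x : ℝ) : EReal)) ≤
      X.cc * X.nrmE fun x => ENNReal.ofReal |η x| * gz x + ENNReal.ofReal |z x| * gη x := by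
  refine X.grad_le_of_perturb (k := fun x => gz x + gη x) ?_ fun τ hτ => h₁.mul hη hz h₂ hτ
  exact lt_of_le_of_lt (X.nrmE_add _ _)
    (ENNReal.mul_lt_top X.cc_lt_top (ENNReal.add_lt_top.2 ⟨hf₂, hf₁⟩))

end QBFL

/-! ### Lower semicontinuous majorants -/

/-- A number in `[0, ∞]` is, up to `δ`, the sum of the levels of height `δ` below it. -/
lemma level_sum {δ : ℝ≥0} (hδ : 0 < δ) (y : ℝ≥0∞) :
    y ≤ ∑' k : ℕ, (if (k * δ : ℝ≥0∞) < y then (δ : ℝ≥0∞) else 0) ∧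
      ∑' k : ℕ, (if (k * δ : ℝ≥0∞) < y then (δ : ℝ≥0∞) else 0) ≤ y + δ := by
  have hδ0 : (δ : ℝ≥0∞) ≠ 0 := by exact_mod_cast hδ.ne'
  induction y with
  | top =>
    have : ∀ k : ℕ, (k * δ : ℝ≥0∞) < ⊤ := fun k =>
      ENNReal.mul_lt_top (ENNReal.natCast_lt_top k) ENNReal.coe_lt_top
    simp [this, ENNReal.tsum_const_eq_top_of_ne_zero hδ0]
  | coe y =>
    have hk : ∀ k : ℕ, (k * δ : ℝ≥0∞) < y ↔ k < ⌈y / δ⌉₊ := by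
      intro k
      rw [Nat.lt_ceil, lt_div_iff₀ hδ]
      exact_mod_cast Iff.rfl
    have hs : ∑' k : ℕ, (if (k * δ : ℝ≥0∞) < y then (δ : ℝ≥0∞) else 0) = ⌈y / δ⌉₊ * δ := by
      rw [tsum_eq_sum (s := Finset.range ⌈y / δ⌉₊)]
      · rw [Finset.sum_congr rfl (g := fun _ => (δ : ℝ≥0∞))]
        · simp
        · intro k hk'
          rw [if_pos ((hk k).2 (Finset.mem_range.1 hk'))]
      · intro k hk'
        rw [if_neg]
        rw [hk]
        simpa using hk'
    rw [hs]
    have h1 : y ≤ ⌈y / δ⌉₊ * δ := (div_le_iff₀ hδ).1 (Nat.le_ceil _)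
    have h2 : ⌈y / δ⌉₊ * δ ≤ y + δ := by
      have := (Nat.ceil_lt_add_one (zero_le (a := y / δ))).le
      calc _ ≤ (y / δ + 1) * δ := by gcongr
        _ = _ := by rw [add_mul, div_mul_cancel₀ _ hδ.ne', one_mul]
    exact ⟨by exact_mod_cast h1, by exact_mod_cast h2⟩

namespace QBFL

variable (X : QBFL P μ)

/-- Outer regularity with respect to the quasi-norm: outer regularity of `μ` combined with absolute
continuity of the quasi-norm. -/
lemma exists_open_approx [BorelSpace P] [μ.OuterRegular] (hAC : X.HasACNorm) {V E : Set P}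
    (hV : IsOpen V) (hμV : μ V ≠ ⊤) (hχ : X.nrmE (V.indicator 1) < ⊤) (hE : MeasurableSet E)
    (hEV : E ⊆ V) {ε : ℝ≥0∞} (hε : 0 < ε) :
    ∃ U, IsOpen U ∧ E ⊆ U ∧ U ⊆ V ∧ X.nrmE ((U \ E).indicator 1) < ε := by
  have hμE : μ E ≠ ⊤ := ne_top_of_le_ne_top hμV (measure_mono hEV)
  have : ∀ n : ℕ, ∃ U ⊇ E, IsOpen U ∧ μ U < ⊤ ∧ μ (U \ E) < (n : ℝ≥0∞)⁻¹ := fun n =>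
    hE.exists_isOpen_sdiff_lt hμE (by simp)
  choose U hEU hUo _ hUμ using this
  set W : ℕ → Set P := fun n => V ∩ ⋂ i ∈ Finset.range (n + 1), U i with hW
  have hWo : ∀ n, IsOpen (W n) := fun n =>
    hV.inter (isOpen_biInter_finset fun i _ => hUo i)
  have hWU : ∀ n, W n ⊆ U n := fun n x hx => by
    have := hx.2
    simp only [mem_iInter] at this
    exact this n (by simp)
  have hEW : ∀ n, E ⊆ W n := fun n =>
    subset_inter hEV (subset_iInter₂ fun i _ => hEU i)
  have hanti : Antitone fun n => W n \ E := by
    intro m n hmn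
    refine sdiff_subset_sdiff_left (inter_subset_inter_right _ ?_)
    refine biInter_subset_biInter_left fun i hi => ?_
    have := Finset.mem_range.1 hi
    exact Finset.mem_range.2 (by omega)
  have h0 : μ (⋂ n, W n \ E) = 0 := by
    have hle : ∀ n : ℕ, μ (⋂ n, W n \ E) ≤ (n : ℝ≥0∞)⁻¹ := fun n =>
      (measure_mono ((iInter_subset _ n).trans (sdiff_subset_sdiff_left (hWU n)))).trans (hUμ n).le
    exact nonpos_iff_eq_zero.1 (ge_of_tendsto' ENNReal.tendsto_inv_nat_nhds_zero hle)
  obtain ⟨n, hn⟩ := (X.exists_indicator_lt hAC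
    (measurable_one.indicator hV.measurableSet) hχ
    (fun n => (hWo n).measurableSet.diff hE) hanti h0 hε).exists
  refine ⟨W n, hWo n, hEW n, inter_subset_left, lt_of_le_of_lt (X.nrmE_mono fun x => ?_) hn⟩
  by_cases hx : x ∈ W n \ E
  · simp [indicator_of_mem hx, indicator_of_mem hx.1.1]
  · simp [indicator_of_notMem hx]

/-- Vitali–Carathéodory in `X`: on an open set of finite measure a function has a lower
semicontinuous majorant of comparable norm, moreover bounded away from zero on that set. -/
lemma exists_lsc [BorelSpace P] [μ.OuterRegular] (hAC : X.HasACNorm) {V : Set P}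
    (hV : IsOpen V) (hμV : μ V ≠ ⊤) (hχ : X.nrmE (V.indicator 1) < ⊤) {G : P → ℝ≥0∞}
    (hG : Measurable G) {ε : ℝ≥0∞} (hε : 0 < ε) :
    ∃ ρ : P → ℝ≥0∞, LowerSemicontinuous ρ ∧ (∃ δ : ℝ≥0, 0 < δ ∧ ∀ x ∈ V, (δ : ℝ≥0∞) ≤ ρ x) ∧
      (∀ x ∉ V, ρ x = 0) ∧ (∀ x ∈ V, G x ≤ ρ x) ∧ X.nrmE ρ ≤ X.cc ^ 2 * X.nrmE G + ε := by
  have hε2 : 0 < ε / 2 := ENNReal.half_pos hε.ne'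
  obtain ⟨δ, hδ, hδε⟩ := exists_small_mul (K := X.cc ^ 2 * 2 * X.nrmE (V.indicator 1)) (ε := ε / 2)
    (ENNReal.mul_ne_top (ENNReal.mul_ne_top (ENNReal.pow_ne_top X.cc_ne) (by simp)) hχ.ne) hε2
  obtain ⟨η, hη, hηε⟩ := exists_small_mul (K := X.cc) X.cc_ne hε2
  obtain ⟨d, hd, hds⟩ := X.exists_weights (ε := η) (by exact_mod_cast hη)
  set E : ℕ → Set P := fun k => V ∩ {x | (k * δ : ℝ≥0∞) < G x + δ} with hEdef
  have hEm : ∀ k, MeasurableSet (E k) := fun k =>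
    hV.measurableSet.inter (measurableSet_lt measurable_const (hG.add_const _))
  have hU : ∀ k, ∃ U, IsOpen U ∧ E k ⊆ U ∧ U ⊆ V ∧
      X.nrmE ((U \ E k).indicator 1) < (d k : ℝ≥0∞) / δ := fun k =>
    X.exists_open_approx hAC hV hμV hχ (hEm k) inter_subset_left
      (ENNReal.div_pos (by exact_mod_cast (hd k).ne') (by simp))
  choose U hUo hEU hUV hUd using hU
  set S : P → ℝ≥0∞ := fun x => ∑' k, (E k).indicator (fun _ => (δ : ℝ≥0∞)) x with hS
  set ρ : P → ℝ≥0∞ := fun x => ∑' k, (U k).indicator (fun _ => (δ : ℝ≥0∞)) x with hρ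
  have hSV : ∀ x ∈ V, S x = ∑' k : ℕ,
      (if (k * δ : ℝ≥0∞) < G x + δ then (δ : ℝ≥0∞) else 0) := by
    intro x hx
    refine tsum_congr fun k => ?_
    simp [indicator, hEdef, hx]
  have hSρ : ∀ x, S x ≤ ρ x := fun x => ENNReal.tsum_le_tsum fun k =>
    indicator_le_indicator_of_subset (hEU k) (fun _ => zero_le) x
  have hGS : ∀ x ∈ V, G x + δ ≤ S x := fun x hx => by
    rw [hSV x hx]; exact (level_sum hδ _).1
  refine ⟨ρ, lowerSemicontinuous_tsum fun k => (hUo k).lowerSemicontinuous_indicator zero_le,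
    ⟨δ, hδ, fun x hx => (le_add_self.trans (hGS x hx)).trans (hSρ x)⟩, fun x hx => ?_,
    fun x hx => (le_self_add.trans (hGS x hx)).trans (hSρ x), ?_⟩
  · simp only [hρ, ENNReal.tsum_eq_zero]
    intro k
    exact indicator_of_notMem (fun h => hx (hUV k h)) _
  · have h1 : ∀ x, ρ x ≤ S x + ∑' k, (δ : ℝ≥0∞) * (U k \ E k).indicator 1 x := by
      intro x
      rw [hS, ← ENNReal.tsum_add]
      refine ENNReal.tsum_le_tsum fun k => ?_
      by_cases h : x ∈ E k
      · simp [h, hEU k h]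
      · by_cases h' : x ∈ U k <;> simp [h, h']
    have h2 : ∀ x, S x ≤ G x + ((2 * δ : ℝ≥0) : ℝ≥0∞) * V.indicator 1 x := by
      intro x
      by_cases hx : x ∈ V
      · rw [hSV x hx]
        refine (level_sum hδ _).2.trans (le_of_eq ?_)
        simp [hx]; ring
      · have : S x = 0 := by
          simp only [hS, ENNReal.tsum_eq_zero]
          intro k
          exact indicator_of_notMem (fun h => hx h.1) _
        simp [this]
    have h3 : X.nrmE (fun x => ∑' k, (δ : ℝ≥0∞) * (U k \ E k).indicator 1 x) ≤ η := by
      refine (X.nrmE_tsum _).trans (le_trans (ENNReal.tsum_le_tsum fun k => ?_) hds.le)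
      rw [X.nrmE_mul]
      gcongr
      rw [mul_comm]
      exact (ENNReal.le_div_iff_mul_le (Or.inl (by exact_mod_cast hδ.ne')) (Or.inl (by simp))).1
        (hUd k).le
    calc X.nrmE ρ ≤ X.cc * (X.nrmE S + η) :=
          (X.nrmE_mono h1).trans ((X.nrmE_add _ _).trans (by gcongr))
      _ ≤ X.cc * (X.cc * (X.nrmE G + (2 * δ : ℝ≥0) * X.nrmE (V.indicator 1)) + η) := by
          gcongr
          refine (X.nrmE_mono h2).trans ((X.nrmE_add _ _).trans ?_)
          rw [X.nrmE_mul]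
      _ = X.cc ^ 2 * X.nrmE G + (X.cc ^ 2 * 2 * X.nrmE (V.indicator 1) * δ + X.cc * η) := by
          push_cast; ring
      _ ≤ X.cc ^ 2 * X.nrmE G + (ε / 2 + ε / 2) := by gcongr
      _ = _ := by rw [ENNReal.add_halves]

end QBFL

/-! ### A lower semicontinuous function with prescribed upper gradient -/

/-- The infimum of `h(y) + ∫_γ ρ ds` over all curves `γ` joining `x` to some point `y`
(constant curves included). -/
def pathInf (h ρ : P → ℝ≥0∞) (x : P) : ℝ≥0∞ :=
  ⨅ (p : (ℝ → P) × ℝ) (_ : LipschitzWith 1 p.1 ∧ 0 ≤ p.2 ∧ p.1 0 = x),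
    h (p.1 p.2) + ∫⁻ t in Icc 0 p.2, ρ (p.1 t)

lemma pathInf_le {h ρ : P → ℝ≥0∞} {c : ℝ → P} (hc : LipschitzWith 1 c) {l : ℝ} (hl : 0 ≤ l) :
    pathInf h ρ (c 0) ≤ h (c l) + ∫⁻ t in Icc 0 l, ρ (c t) :=
  iInf₂_le (c, l) ⟨hc, hl, rfl⟩

lemma pathInf_le_self (h ρ : P → ℝ≥0∞) (x : P) : pathInf h ρ x ≤ h x := by
  have := pathInf_le (h := h) (ρ := ρ) (LipschitzWith.const' (K := 1) x) (le_refl (0 : ℝ))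
  simpa using this

lemma lipschitz_concat {c₁ c₂ : ℝ → P} (h₁ : LipschitzWith 1 c₁) (h₂ : LipschitzWith 1 c₂)
    {b : ℝ} (hb : c₁ b = c₂ 0) :
    LipschitzWith 1 fun t => if t ≤ b then c₁ t else c₂ (t - b) := by
  have key : ∀ s t, s ≤ b → b < t → dist (c₁ s) (c₂ (t - b)) ≤ t - s := by
    intro s t hs ht
    have e1 := h₁.dist_le_mul s b
    have e2 := h₂.dist_le_mul 0 (t - b)
    rw [Real.dist_eq, abs_of_nonpos (by linarith), NNReal.coe_one, one_mul] at e1 e2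
    have := dist_triangle (c₁ s) (c₁ b) (c₂ (t - b))
    rw [hb] at this e1
    linarith
  refine LipschitzWith.of_dist_le_mul fun s t => ?_
  rw [NNReal.coe_one, one_mul]
  by_cases hs : s ≤ b <;> by_cases ht : t ≤ b <;> simp only [hs, ht, if_true, if_false]
  · simpa using h₁.dist_le_mul s t
  · rw [Real.dist_eq, abs_sub_comm]
    exact (key s t hs (not_le.1 ht)).trans (le_abs_self _)
  · rw [Real.dist_eq, dist_comm]
    exact (key t s ht (not_le.1 hs)).trans (le_abs_self _)
  · simpa using h₂.dist_le_mul (s - b) (t - b)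

lemma lipschitz_shift {c : ℝ → P} (hc : LipschitzWith 1 c) (a : ℝ) :
    LipschitzWith 1 fun t => c (t + a) := by
  refine LipschitzWith.of_dist_le_mul fun s t => ?_
  simpa using hc.dist_le_mul (s + a) (t + a)

lemma lipschitz_reflect {c : ℝ → P} (hc : LipschitzWith 1 c) (a : ℝ) :
    LipschitzWith 1 fun t => c (a - t) := by
  refine LipschitzWith.of_dist_le_mul fun s t => ?_
  have h := hc.dist_le_mul (a - s) (a - t)
  rwa [dist_sub_left] at h

lemma pathInf_step {h ρ : P → ℝ≥0∞} {c : ℝ → P} (hc : LipschitzWith 1 c) {a b : ℝ}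
    (hab : a ≤ b) :
    pathInf h ρ (c a) ≤ pathInf h ρ (c b) + ∫⁻ t in Icc a b, ρ (c t) := by
  rw [← tsub_le_iff_right]
  refine le_iInf₂ fun p hp => ?_
  obtain ⟨h1, h2, h3⟩ := hp
  rw [tsub_le_iff_right]
  have hj : c (b - a + a) = p.1 0 := by rw [sub_add_cancel, h3]
  have hk := pathInf_le (h := h) (ρ := ρ) (lipschitz_concat (lipschitz_shift hc a) h1 hj)
    (l := b - a + p.2) (by linarith)
  rw [lintegral_Icc_add _ (sub_nonneg.2 hab) (by linarith : b - a ≤ b - a + p.2)] at hk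
  have e1 : ∫⁻ t in Icc 0 (b - a), ρ (if t ≤ b - a then c (t + a) else p.1 (t - (b - a))) =
      ∫⁻ t in Icc a b, ρ (c t) := by
    rw [setLIntegral_congr_fun (g := fun t => ρ (c (t + a))) measurableSet_Icc
      fun t ht => by simp only [if_pos ht.2], lintegral_Icc_shift fun t => ρ (c t)]
    simp
  have hval : ∀ t, 0 ≤ t →
      (if t + (b - a) ≤ b - a then c (t + (b - a) + a) else p.1 (t + (b - a) - (b - a))) =
        p.1 t := by
    intro t ht
    split_ifs with hle
    · have : t = 0 := by linarith
      subst this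
      rw [← hj, zero_add]
    · rw [add_sub_cancel_right]
  have e2 : ∫⁻ t in Icc (b - a) (b - a + p.2),
      ρ (if t ≤ b - a then c (t + a) else p.1 (t - (b - a))) = ∫⁻ t in Icc 0 p.2, ρ (p.1 t) := by
    have hs := lintegral_Icc_shift
      (fun t => ρ (if t ≤ b - a then c (t + a) else p.1 (t - (b - a)))) 0 p.2 (b - a)
    rw [zero_add, add_comm p.2] at hs
    rw [← hs]
    exact setLIntegral_congr_fun measurableSet_Icc fun t ht => congrArg ρ (hval t ht.1)
  have e3 := hval p.2 h2
  rw [add_comm p.2] at e3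
  rw [e1, e2, e3, if_pos (sub_nonneg.2 hab), zero_add] at hk
  refine hk.trans (le_of_eq ?_)
  ring

lemma pathInf_step' {h ρ : P → ℝ≥0∞} {c : ℝ → P} (hc : LipschitzWith 1 c) {a b : ℝ}
    (hab : a ≤ b) :
    pathInf h ρ (c b) ≤ pathInf h ρ (c a) + ∫⁻ t in Icc a b, ρ (c t) := by
  have := pathInf_step (h := h) (ρ := ρ) (lipschitz_reflect hc (a + b)) hab
  rw [lintegral_Icc_reflect (fun t => ρ (c t))] at this
  simpa using this

lemma le_pathInf {h ρ w : P → ℝ≥0∞} (hwh : ∀ x, w x ≤ h x)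
    (hw : ∀ c : ℝ → P, LipschitzWith 1 c → ∀ l, 0 < l →
      w (c 0) ≤ w (c l) + ∫⁻ t in Icc 0 l, ρ (c t)) (x : P) : w x ≤ pathInf h ρ x := by
  refine le_iInf₂ fun p hp => ?_
  obtain ⟨h1, h2, h3⟩ := hp
  rw [← h3]
  rcases eq_or_lt_of_le h2 with h4 | h4
  · rw [← h4]
    exact (hwh _).trans le_self_add
  · exact (hw _ h1 _ h4).trans (by gcongr; exact hwh _)

/-- A sequence of curves of bounded length starting in a compact set subconverges. -/
lemma exists_limit_curve [ProperSpace P] {c : ℕ → ℝ → P} (hc : ∀ n, LipschitzWith 1 (c n))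
    {L : ℝ} (hL : 0 ≤ L) {l : ℕ → ℝ} (hl : ∀ n, l n ∈ Icc 0 L) {x : P}
    (hx : Tendsto (fun n => c n 0) atTop (𝓝 x)) :
    ∃ (ψ : ℕ → ℕ) (c' : ℝ → P) (l' : ℝ), StrictMono ψ ∧ LipschitzWith 1 c' ∧ l' ∈ Icc 0 L ∧
      Tendsto (fun n => l (ψ n)) atTop (𝓝 l') ∧
      ∀ t ∈ Icc 0 L, Tendsto (fun n => c (ψ n) t) atTop (𝓝 (c' t)) := by
  obtain ⟨R, hR⟩ := (Metric.isBounded_range_of_tendsto _ hx).subset_closedBall x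
  set S : Set C(Icc 0 L, P) :=
    {f | LipschitzWith 1 f ∧ ∀ t, f t ∈ closedBall x (R + L)} with hS
  have hScomp : IsCompact S := by
    refine ArzelaAscoli.isCompact_of_equicontinuous S ?_ ?_
    · have hpi : IsCompact (Set.pi univ fun _ : Icc 0 L => closedBall x (R + L)) :=
        isCompact_univ_pi fun _ => isCompact_closedBall _ _
      have himg : ContinuousMap.toFun '' S =
          (Set.pi univ fun _ : Icc 0 L => closedBall x (R + L)) ∩ {f | LipschitzWith 1 f} := by
        ext f
        constructor
        · rintro ⟨g, ⟨h1, h2⟩, rfl⟩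
          exact ⟨fun t _ => h2 t, h1⟩
        · rintro ⟨h1, h2⟩
          exact ⟨⟨f, h2.continuous⟩, ⟨h2, fun t => h1 t trivial⟩, rfl⟩
      rw [himg]
      exact hpi.inter_right (isClosed_setOfPred_lipschitzWith 1)
    · refine (LipschitzWith.uniformEquicontinuous _ 1 fun f => ?_).equicontinuous
      exact f.2.1
  set f : ℕ → C(Icc 0 L, P) := fun n =>
    ⟨fun t => c n t, (hc n).continuous.comp continuous_subtype_val⟩ with hf
  have hfS : ∀ n, f n ∈ S := by
    intro n
    refine ⟨?_, fun t => ?_⟩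
    · exact LipschitzWith.of_dist_le_mul fun s t => (hc n).dist_le_mul s t
    · have h1 : c n 0 ∈ closedBall x R := hR ⟨n, rfl⟩
      have h2 := (hc n).dist_le_mul t 0
      rw [Real.dist_eq, sub_zero, abs_of_nonneg t.2.1, NNReal.coe_one, one_mul] at h2
      rw [mem_closedBall] at h1 ⊢
      have h3 := dist_triangle (c n t) (c n 0) x
      have h4 := t.2.2
      change dist (c n t) x ≤ R + L
      linarith
  have hcomp := hScomp.prod (isCompact_Icc (a := (0 : ℝ)) (b := L))
  obtain ⟨⟨f', l'⟩, ⟨hf', hl'⟩, ψ, hψ, hlim⟩ :=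
    hcomp.tendsto_subseq (x := fun n => (f n, l n)) fun n => ⟨hfS n, hl n⟩
  have hlim1 : Tendsto (fun n => f (ψ n)) atTop (𝓝 f') := (continuous_fst.tendsto _).comp hlim
  have hlim2 : Tendsto (fun n => l (ψ n)) atTop (𝓝 l') := (continuous_snd.tendsto _).comp hlim
  refine ⟨ψ, fun t => f' (projIcc 0 L hL t), l', hψ, ?_, hl', hlim2, fun t ht => ?_⟩
  · have h := hf'.1.comp (LipschitzWith.projIcc hL)
    rw [one_mul] at h
    exact h
  · have h := ((continuous_eval_const (F := C(Icc 0 L, P)) (⟨t, ht⟩ : Icc 0 L)).tendsto f').comp hlim1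
    change Tendsto _ _ (𝓝 (f' (projIcc 0 L hL t)))
    rw [projIcc_of_mem hL ht]
    exact h


lemma liminf_add_liminf_le (a b : ℕ → ℝ≥0∞) :
    liminf a atTop + liminf b atTop ≤ liminf (fun n => a n + b n) atTop := by
  simp only [liminf_eq_iSup_iInf_of_nat]
  rw [ENNReal.iSup_add_iSup_of_monotone]
  · refine iSup_mono fun n => le_iInf₂ fun i hi => ?_
    exact add_le_add (iInf₂_le i hi) (iInf₂_le i hi)
  · exact fun m n hmn => le_iInf₂ fun i hi => iInf₂_le i (hmn.trans hi)
  · exact fun m n hmn => le_iInf₂ fun i hi => iInf₂_le i (hmn.trans hi)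

/-- A curve may be stopped when it first leaves `V`; this does not increase the quantity
minimized in `pathInf`, and `ρ` is bounded below along what remains. -/
lemma exists_truncation {V : Set P} (hV : IsOpen V) {h ρ : P → ℝ≥0∞} {δ : ℝ≥0}
    (hρV : ∀ x ∈ V, δ ≤ ρ x) (hV0 : ∀ x ∉ V, h x = 0) {c : ℝ → P} (hc : LipschitzWith 1 c)
    {l : ℝ} (hl : 0 ≤ l) :
    ∃ l', 0 ≤ l' ∧ (h (c l') + ∫⁻ t in Icc 0 l', ρ (c t) ≤ h (c l) + ∫⁻ t in Icc 0 l, ρ (c t)) ∧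
      δ * ENNReal.ofReal l' ≤ ∫⁻ t in Icc 0 l', ρ (c t) := by
  have key : ∀ l', (∀ t ∈ Ico 0 l', c t ∈ V) →
      δ * ENNReal.ofReal l' ≤ ∫⁻ t in Icc 0 l', ρ (c t) := by
    intro l' hl'
    calc (δ : ℝ≥0∞) * ENNReal.ofReal l' = ∫⁻ t in Ico 0 l', (δ : ℝ≥0∞) := by simp
      _ ≤ ∫⁻ t in Ico 0 l', ρ (c t) := setLIntegral_mono' measurableSet_Ico
          fun t ht => hρV _ (hl' t ht)
      _ ≤ _ := lintegral_mono_set Ico_subset_Icc_self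
  by_cases hin : ∀ t ∈ Icc 0 l, c t ∈ V
  · exact ⟨l, hl, le_rfl, key l fun t ht => hin t (Ico_subset_Icc_self ht)⟩
  · push Not at hin
    obtain ⟨t₀, ht₀, ht₀V⟩ := hin
    have hK : IsCompact (Icc 0 l ∩ c ⁻¹' Vᶜ) :=
      isCompact_Icc.inter_right (hV.isClosed_compl.preimage hc.continuous)
    obtain ⟨l', ⟨hl'I, hl'V⟩, hmin⟩ := hK.exists_isLeast ⟨t₀, ht₀, ht₀V⟩
    refine ⟨l', hl'I.1, ?_, key l' fun t ht => ?_⟩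
    · rw [hV0 _ hl'V, zero_add]
      exact (lintegral_Icc_mono _ le_rfl hl'I.2).trans le_add_self
    · by_contra hcon
      exact absurd (hmin ⟨⟨ht.1, ht.2.le.trans hl'I.2⟩, hcon⟩) (not_le.2 ht.2)

/-- The direct method: near-optimal curves starting near `x` have bounded length, hence
subconverge, and the functional `h(γ(l)) + ∫_γ ρ ds` is lower semicontinuous. -/
lemma isClosed_pathInf_le [ProperSpace P] [BorelSpace P] {V : Set P} (hV : IsOpen V)
    {h ρ : P → ℝ≥0∞} (hh : LowerSemicontinuous h) (hρ : LowerSemicontinuous ρ) {δ : ℝ≥0}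
    (hδ : 0 < δ) (hρV : ∀ x ∈ V, δ ≤ ρ x) (hV0 : ∀ x ∉ V, h x = 0) {s : ℝ≥0∞} (hs : s ≠ ⊤) :
    IsClosed {x | pathInf h ρ x ≤ s} := by
  refine IsSeqClosed.isClosed fun x y hx hxy => ?_
  have hch : ∀ n : ℕ, ∃ (c : ℝ → P) (l : ℝ), LipschitzWith 1 c ∧ 0 ≤ l ∧ c 0 = x n ∧
      h (c l) + ∫⁻ t in Icc 0 l, ρ (c t) ≤ s + (n + 1 : ℝ≥0∞)⁻¹ ∧
      δ * ENNReal.ofReal l ≤ ∫⁻ t in Icc 0 l, ρ (c t) := by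
    intro n
    have hlt : pathInf h ρ (x n) < s + (n + 1 : ℝ≥0∞)⁻¹ :=
      lt_of_le_of_lt (hx n) (ENNReal.lt_add_right hs (by simp))
    rw [pathInf, iInf_lt_iff] at hlt
    obtain ⟨p, hp⟩ := hlt
    rw [iInf_lt_iff] at hp
    obtain ⟨⟨h1, h2, h3⟩, h4⟩ := hp
    obtain ⟨l', h5, h6, h7⟩ := exists_truncation hV hρV hV0 h1 h2
    exact ⟨p.1, l', h1, h5, h3, h6.trans h4.le, h7⟩
  choose c l hc hl hc0 hval hlen using hch
  set L : ℝ := ((s + 1) / δ).toReal with hLdef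
  have hδ' : (δ : ℝ≥0∞) ≠ 0 := by exact_mod_cast hδ.ne'
  have hfinL : (s + 1) / δ ≠ ⊤ := ENNReal.div_ne_top (by simp [hs]) hδ'
  have hlL : ∀ n, l n ∈ Icc 0 L := by
    intro n
    refine ⟨hl n, ?_⟩
    rw [hLdef, ← ENNReal.ofReal_le_iff_le_toReal hfinL,
      ENNReal.le_div_iff_mul_le (Or.inl hδ') (Or.inl ENNReal.coe_ne_top), mul_comm]
    refine (hlen n).trans (le_add_self.trans ((hval n).trans ?_))
    gcongr
    rw [ENNReal.inv_le_one]
    exact le_add_self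
  have hL : 0 ≤ L := ENNReal.toReal_nonneg
  obtain ⟨ψ, c', l', hψ, hc', hl', hlim, hpt⟩ :=
    exists_limit_curve hc hL hlL (x := y) (by simpa only [hc0] using hxy)
  have hy : c' 0 = y := by
    refine tendsto_nhds_unique (hpt 0 ⟨le_rfl, hL⟩) ?_
    simp only [hc0]
    exact hxy.comp hψ.tendsto_atTop
  have hend : Tendsto (fun n => c (ψ n) (l (ψ n))) atTop (𝓝 (c' l')) := by
    refine tendsto_of_tendsto_of_dist (hpt l' hl') ?_
    refine squeeze_zero (fun _ => dist_nonneg) (fun n => ?_)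
      (g := fun n => dist l' (l (ψ n))) ?_
    · simpa using (hc (ψ n)).dist_le_mul l' (l (ψ n))
    · have := (tendsto_const_nhds (x := l')).dist hlim
      simpa using this
  set F : ℕ → ℝ → ℝ≥0∞ := fun n => (Icc 0 (l (ψ n))).indicator fun t => ρ (c (ψ n) t) with hF
  have hFm : ∀ n, Measurable (F n) := fun n =>
    (hρ.measurable.comp (hc (ψ n)).continuous.measurable).indicator measurableSet_Icc
  have h1 : h (c' l') ≤ liminf (fun n => h (c (ψ n) (l (ψ n)))) atTop :=
    (hh.le_liminf (c' l')).trans (hend.liminf_le_liminf_comp)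
  have h2 : ∫⁻ t in Icc 0 l', ρ (c' t) ≤
      liminf (fun n => ∫⁻ t in Icc 0 (l (ψ n)), ρ (c (ψ n) t)) atTop := by
    have e : ∀ n, ∫⁻ t in Icc 0 (l (ψ n)), ρ (c (ψ n) t) = ∫⁻ t, F n t := fun n =>
      (lintegral_indicator measurableSet_Icc _).symm
    simp only [e]
    refine le_trans ?_ (lintegral_liminf_le hFm)
    rw [setLIntegral_congr Ico_ae_eq_Icc.symm, ← lintegral_indicator measurableSet_Ico]
    refine lintegral_mono fun t => ?_
    by_cases ht : t ∈ Ico 0 l'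
    · rw [indicator_of_mem ht]
      have hev : ∀ᶠ n in atTop, F n t = ρ (c (ψ n) t) := by
        filter_upwards [hlim.eventually (lt_mem_nhds ht.2)] with n hn
        have hmem : t ∈ Icc 0 (l (ψ n)) := ⟨ht.1, hn.le⟩
        exact indicator_of_mem hmem _
      rw [liminf_congr hev]
      exact (hρ.le_liminf (c' t)).trans
        ((hpt t ⟨ht.1, ht.2.le.trans hl'.2⟩).liminf_le_liminf_comp)
    · rw [indicator_of_notMem ht]
      exact zero_le
  have h3 : liminf (fun n => h (c (ψ n) (l (ψ n))) + ∫⁻ t in Icc 0 (l (ψ n)), ρ (c (ψ n) t))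
      atTop ≤ s := by
    have ht : Tendsto (fun n : ℕ => s + ((ψ n : ℕ) + 1 : ℝ≥0∞)⁻¹) atTop (𝓝 (s + 0)) := by
      refine tendsto_const_nhds.add ?_
      have := (ENNReal.tendsto_inv_nat_nhds_zero.comp (tendsto_add_atTop_nat 1)).comp
        hψ.tendsto_atTop
      simpa [Function.comp_def] using this
    rw [add_zero] at ht
    rw [← ht.liminf_eq]
    exact liminf_le_liminf (Eventually.of_forall fun n => hval (ψ n))
  change pathInf h ρ y ≤ s
  rw [← hy]
  refine (pathInf_le hc' hl'.1).trans ((add_le_add h1 h2).trans (le_trans ?_ h3))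
  exact liminf_add_liminf_le _ _

/-! ### Capacitary majorants -/

lemma abs_coe_sub_coe (a b : ℝ) : ((a : EReal) - (b : EReal)).abs = ENNReal.ofReal |a - b| := by
  rw [← EReal.coe_sub, EReal.abs_def]

/-- A function vanishing off `V` obeys the upper gradient inequality for any `ρ` that dominates
its upper gradient on `V` only: follow the curve up to its first exit from `V`. -/
lemma abs_le_of_vanish_off {V : Set P} (hV : IsOpen V) {z : P → ℝ} (hz0 : ∀ x ∉ V, z x = 0)
    {g ρ : P → ℝ≥0∞} (hg : IsUpperGradient (fun x => (z x : EReal)) g)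
    (hgρ : ∀ x ∈ V, g x ≤ ρ x) {c : ℝ → P} (hc : LipschitzWith 1 c) {l : ℝ} (hl : 0 < l) :
    ENNReal.ofReal |z (c 0)| ≤
      ENNReal.ofReal |z (c l)| + ∫⁻ t in Icc 0 l, ρ (c t) := by
  have key : ∀ l', 0 ≤ l' → l' ≤ l → (∀ t ∈ Ico 0 l', c t ∈ V) →
      ENNReal.ofReal |z (c 0)| ≤ ENNReal.ofReal |z (c l')| + ∫⁻ t in Icc 0 l, ρ (c t) := by
    intro l' h0 h1 hin
    rcases eq_or_lt_of_le h0 with h0 | h0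
    · rw [← h0]
      exact le_self_add
    · have h2 := (isUpperGradient_iff.1 hg).2 c hc 0 l' h0
      rw [abs_coe_sub_coe, setLIntegral_congr Ico_ae_eq_Icc.symm] at h2
      calc ENNReal.ofReal |z (c 0)|
          ≤ ENNReal.ofReal (|z (c l')| + |z (c 0) - z (c l')|) := by
            refine ENNReal.ofReal_le_ofReal ?_
            have := abs_add_le (z (c l')) (z (c 0) - z (c l'))
            rwa [add_sub_cancel] at this
        _ = ENNReal.ofReal |z (c l')| + ENNReal.ofReal |z (c 0) - z (c l')| :=
            ENNReal.ofReal_add (abs_nonneg _) (abs_nonneg _)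
        _ ≤ _ := by
            gcongr
            refine h2.trans ((setLIntegral_mono' measurableSet_Ico
              fun t ht => hgρ _ (hin t ht)).trans ?_)
            exact lintegral_mono_set (Ico_subset_Icc_self.trans (Icc_subset_Icc_right h1))
  by_cases hin : ∀ t ∈ Ico 0 l, c t ∈ V
  · exact key l hl.le le_rfl hin
  · push Not at hin
    obtain ⟨t₀, ht₀, ht₀V⟩ := hin
    have hK : IsCompact (Icc 0 l ∩ c ⁻¹' Vᶜ) :=
      isCompact_Icc.inter_right (hV.isClosed_compl.preimage hc.continuous)
    obtain ⟨l', ⟨hl'I, hl'V⟩, hmin⟩ := hK.exists_isLeast ⟨t₀, Ico_subset_Icc_self ht₀, ht₀V⟩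
    refine (key l' hl'I.1 hl'I.2 fun t ht => ?_).trans ?_
    · by_contra hcon
      exact absurd (hmin ⟨⟨ht.1, ht.2.le.trans hl'I.2⟩, hcon⟩) (not_le.2 ht.2)
    · rw [hz0 _ hl'V, abs_zero, ENNReal.ofReal_zero, zero_add]
      exact le_add_self

namespace QBFL

/-- The key construction behind the quasicontinuity of Newtonian functions: a function `z`
vanishing off an open set of finite measure has a majorant of `min 1 |z|` with closed sublevel
sets and with Newtonian quasi-norm comparable to that of `z`. -/
lemma exists_cap [BorelSpace P] [ProperSpace P] [μ.OuterRegular] (X : QBFL P μ)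
    (hAC : X.HasACNorm) {V : Set P} (hV : IsOpen V) (hμV : μ V ≠ ⊤)
    (hχ : X.nrmE (V.indicator 1) < ⊤) {z : P → ℝ} (hz : Measurable z) (hz0 : ∀ x ∉ V, z x = 0)
    {g : P → ℝ≥0∞} (hg : IsUpperGradient (fun x => (z x : EReal)) g)
    {ε : ℝ≥0∞} (hε : 0 < ε) :
    ∃ (u : P → ℝ) (ρ : P → ℝ≥0∞), (∀ x, 0 ≤ u x) ∧ (∀ x, u x ≤ 1) ∧
      (∀ s, s < 1 → IsClosed {x | u x ≤ s}) ∧ (∀ x, min 1 |z x| ≤ u x) ∧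
      IsUpperGradient (fun x => (u x : EReal)) ρ ∧ X.nrmE ρ ≤ X.cc ^ 2 * X.nrmE g + ε ∧
      X.nrmE (fun x => ENNReal.ofReal |u x|) ≤
        X.cc ^ 2 * X.nrmE (fun x => ENNReal.ofReal |z x|) + ε := by
  obtain ⟨ρ, hρ, ⟨δ, hδ, hρδ⟩, -, hgρ, hρn⟩ := X.exists_lsc hAC hV hμV hχ hg.1 hε
  obtain ⟨h, hh, -, hh0, hzh, hhn⟩ := X.exists_lsc hAC hV hμV hχ
    (G := fun x => ENNReal.ofReal |z x|) hz.abs.ennreal_ofReal hε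
  have hzh' : ∀ x, ENNReal.ofReal |z x| ≤ h x := by
    intro x
    by_cases hx : x ∈ V
    · exact hzh x hx
    · simp [hz0 x hx]
  have hlow : ∀ x, ENNReal.ofReal |z x| ≤ pathInf h ρ x :=
    le_pathInf hzh' fun c hc l hl => abs_le_of_vanish_off hV hz0 hg hgρ hc hl
  have hfin : ∀ x, min 1 (pathInf h ρ x) ≠ ⊤ := fun x =>
    (lt_of_le_of_lt (min_le_left _ _) ENNReal.one_lt_top).ne
  set u : P → ℝ := fun x => (min 1 (pathInf h ρ x)).toReal with hu
  have hu0 : ∀ x, 0 ≤ u x := fun x => ENNReal.toReal_nonneg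
  have hofu : ∀ x, ENNReal.ofReal (u x) = min 1 (pathInf h ρ x) := fun x =>
    ENNReal.ofReal_toReal (hfin x)
  refine ⟨u, ρ, hu0, fun x => ?_, fun s hs => ?_, fun x => ?_, ?_, hρn, ?_⟩
  · exact ENNReal.toReal_le_of_le_ofReal zero_le_one (by simp)
  · rcases lt_or_ge s 0 with hs0 | hs0
    · convert isClosed_empty
      ext x
      simpa using lt_of_lt_of_le hs0 (hu0 x)
    · convert isClosed_pathInf_le hV hh hρ hδ hρδ hh0 (s := ENNReal.ofReal s)
        ENNReal.ofReal_ne_top using 1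
      ext x
      simp only [mem_ofPred_eq]
      rw [← ENNReal.ofReal_le_ofReal_iff hs0, hofu, min_le_iff, or_iff_right]
      simpa using hs
  · rw [← ENNReal.ofReal_le_ofReal_iff (hu0 x), hofu, ENNReal.ofReal_min, ENNReal.ofReal_one]
    exact min_le_min_left _ (hlow x)
  · refine isUpperGradient_iff.2 ⟨hρ.measurable, fun c hc a b hab => ?_⟩
    have h1 := pathInf_step (h := h) (ρ := ρ) hc hab.le
    have h2 := pathInf_step' (h := h) (ρ := ρ) hc hab.le
    rw [abs_coe_sub_coe]
    have hstep : ∀ x y, pathInf h ρ x ≤ pathInf h ρ y + ∫⁻ t in Icc a b, ρ (c t) →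
        ENNReal.ofReal (u x - u y) ≤ ∫⁻ t in Icc a b, ρ (c t) := by
      intro x y hxy
      rw [ENNReal.ofReal_sub _ (hu0 y), hofu, hofu, tsub_le_iff_left]
      rcases le_total 1 (pathInf h ρ y) with h3 | h3
      · rw [min_eq_left h3]
        exact (min_le_left _ _).trans le_self_add
      · rw [min_eq_right h3]
        exact (min_le_right _ _).trans hxy
    rcases abs_cases (u (c a) - u (c b)) with h3 | h3
    · rw [h3.1]
      exact hstep _ _ h1
    · rw [h3.1, neg_sub]
      exact hstep _ _ h2
  · refine le_trans (X.nrmE_mono fun x => ?_) hhn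
    rw [abs_of_nonneg (hu0 x), hofu]
    exact (min_le_right _ _).trans (pathInf_le_self _ _ _)

end QBFL

/-! ### Cutoff functions -/

/-- The distance cutoff `1 - min 1 (dist(·, C)/r)`; its upper gradient is supported in the layer
`0 < dist(·, C) < r`. -/
lemma exists_cutoff [BorelSpace P] (C : Set P) {r : ℝ} (hr : 0 < r) :
    ∃ η : P → ℝ, (∃ K : ℝ≥0, LipschitzWith K η) ∧ (∀ x, 0 ≤ η x) ∧ (∀ x, η x ≤ 1) ∧
      (∀ x ∈ C, η x = 1) ∧ (∀ x, r ≤ infDist x C → η x = 0) ∧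
      IsUpperGradient (fun x => (η x : EReal))
        ({x | 0 < infDist x C ∧ infDist x C < r}.indicator fun _ => ENNReal.ofReal r⁻¹) := by
  have hdL : LipschitzWith (Real.toNNReal r⁻¹) fun x => infDist x C / r := by
    refine LipschitzWith.of_dist_le_mul fun x y => ?_
    have h := (lipschitz_infDist_pt C).dist_le_mul x y
    rw [Real.coe_toNNReal _ (inv_nonneg.2 hr.le), Real.dist_eq, ← sub_div, abs_div,
      abs_of_pos hr, div_eq_inv_mul]
    rw [NNReal.coe_one, one_mul, Real.dist_eq] at h
    exact mul_le_mul_of_nonneg_left h (inv_nonneg.2 hr.le)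
  have hdU : IsUpperGradient (fun x => ((infDist x C / r : ℝ) : EReal))
      fun _ => ENNReal.ofReal r⁻¹ := by
    refine isUpperGradient_iff.2 ⟨measurable_const, fun c hc a b hab => ?_⟩
    rw [abs_coe_sub_coe, setLIntegral_const, Real.volume_Icc,
      ← ENNReal.ofReal_mul (inv_nonneg.2 hr.le)]
    refine ENNReal.ofReal_le_ofReal ?_
    have h1 := hdL.dist_le_mul (c a) (c b)
    have h2 := hc.dist_le_mul a b
    rw [Real.coe_toNNReal _ (inv_nonneg.2 hr.le), Real.dist_eq] at h1
    rw [NNReal.coe_one, one_mul, Real.dist_eq, abs_sub_comm, abs_of_pos (sub_pos.2 hab)] at h2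
    exact h1.trans (mul_le_mul_of_nonneg_left h2 (inv_nonneg.2 hr.le))
  have hd0 : ∀ x, 0 ≤ infDist x C / r := fun x => div_nonneg infDist_nonneg hr.le
  refine ⟨fun x => 1 - min 1 (infDist x C / r), ⟨Real.toNNReal r⁻¹, ?_⟩, fun x => ?_, fun x => ?_,
    fun x hx => ?_, fun x hx => ?_, ?_⟩
  · refine LipschitzWith.of_dist_le_mul fun x y => ?_
    refine le_trans ?_ (hdL.dist_le_mul x y)
    rw [dist_sub_left, Real.dist_eq, Real.dist_eq]
    simpa using abs_min_sub_min_le_max 1 (infDist x C / r) 1 (infDist y C / r)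
  · have := min_le_left 1 (infDist x C / r)
    linarith
  · have := le_min zero_le_one (hd0 x)
    linarith
  · simp [infDist_zero_of_mem hx]
  · simp [min_eq_left ((one_le_div hr).2 hx)]
  · refine isUpperGradient_iff.2 ⟨measurable_const.indicator ?_, fun c hc a b hab => ?_⟩
    · exact (isOpen_lt continuous_const (continuous_infDist_pt C)).measurableSet.inter
        (isOpen_lt (continuous_infDist_pt C) continuous_const).measurableSet
    have hcl := clampE_curve hdU hc hab
      (by rw [setLIntegral_const]; exact ENNReal.mul_ne_top ENNReal.ofReal_ne_top (by simp))
      (α := 0) (β := 1) (by simp) (bot_lt_iff_ne_bot.1 (EReal.bot_lt_coe 1))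
    have hcv : ∀ x, clampE 0 1 ((infDist x C / r : ℝ) : EReal) =
        ((min 1 (infDist x C / r) : ℝ) : EReal) := by
      intro x
      have h1 : (1 : EReal) = ((1 : ℝ) : EReal) := rfl
      have h0 : (0 : EReal) = ((0 : ℝ) : EReal) := rfl
      rw [clampE, h1, h0, ← EReal.coe_strictMono.monotone.map_min,
        ← EReal.coe_strictMono.monotone.map_max,
        max_eq_right (le_min zero_le_one (hd0 x))]
    rw [hcv, hcv, abs_coe_sub_coe] at hcl
    rw [abs_coe_sub_coe]
    convert hcl using 2
    · rw [show ∀ p q : ℝ, 1 - p - (1 - q) = -(p - q) by intros; ring, abs_neg]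
    · ext t
      have hset : {x | 0 < infDist x C ∧ infDist x C < r} =
          {x | (0 : EReal) < ((infDist x C / r : ℝ) : EReal) ∧
            ((infDist x C / r : ℝ) : EReal) < 1} := by
        ext x
        simp only [mem_ofPred_eq]
        rw [EReal.coe_pos, div_pos_iff_of_pos_right hr, ← EReal.coe_one, EReal.coe_lt_coe_iff,
          div_lt_one hr]
      rw [hset]

lemma isCompact_infDist_le [ProperSpace P] {C : Set P} (hC : IsCompact C) (hne : C.Nonempty)
    (r : ℝ) : IsCompact {x | infDist x C ≤ r} := by
  refine Metric.isCompact_of_isClosed_isBounded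
    (isClosed_le (continuous_infDist_pt C) continuous_const) ?_
  obtain ⟨y, hy⟩ := hne
  obtain ⟨D, hD⟩ := hC.isBounded.subset_closedBall y
  refine isBounded_closedBall.subset (fun x hx => ?_ : _ ⊆ closedBall y (r + 1 + D))
  obtain ⟨z, hz, hxz⟩ := (infDist_lt_iff (r := r + 1) ⟨y, hy⟩).1
    (lt_of_le_of_lt hx (lt_add_one r))
  have h1 := hD hz
  rw [mem_closedBall] at h1 ⊢
  linarith [dist_triangle x z y]

/-- A cutoff times a locally Lipschitz function is Lipschitz. -/
lemma lipschitz_cutoff_mul [ProperSpace P] {C : Set P} (hC : IsCompact C) {r : ℝ}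
    (hne : C.Nonempty) {η f : P → ℝ} {K : ℝ≥0} (hη : LipschitzWith K η) (h0 : ∀ x, 0 ≤ η x)
    (h1 : ∀ x, η x ≤ 1) (hout : ∀ x, r ≤ infDist x C → η x = 0) (hf : LocallyLipschitz f) :
    ∃ K' : ℝ≥0, LipschitzWith K' fun x => η x * f x := by
  have hcomp := isCompact_infDist_le hC hne r
  obtain ⟨L, hL⟩ := hf.locallyLipschitzOn.exists_lipschitzOnWith_of_compact hcomp
  obtain ⟨B, hB⟩ := hcomp.exists_bound_of_continuousOn hf.continuous.continuousOn
  set B' : ℝ≥0 := Real.toNNReal B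
  have hB' : ∀ x, infDist x C ≤ r → |f x| ≤ B' := fun x hx => (hB x hx).trans (le_max_left _ _)
  have hone : ∀ x y, infDist x C ≤ r → r < infDist y C →
      |η x * f x - η y * f y| ≤ (L + B' * K : ℝ≥0) * dist x y := by
    intro x y hx hy
    have e1 := hη.dist_le_mul x y
    rw [Real.dist_eq, hout y hy.le, sub_zero] at e1
    rw [hout y hy.le, zero_mul, sub_zero, abs_mul]
    calc |η x| * |f x| ≤ (K * dist x y) * B' :=
          mul_le_mul e1 (hB' x hx) (abs_nonneg _) (by positivity)
      _ ≤ _ := by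
        push_cast
        nlinarith [mul_nonneg L.coe_nonneg (dist_nonneg (x := x) (y := y))]
  refine ⟨L + B' * K, LipschitzWith.of_dist_le_mul fun x y => ?_⟩
  rw [Real.dist_eq]
  rcases le_or_gt (infDist x C) r with hx | hx <;> rcases le_or_gt (infDist y C) r with hy | hy
  · have e1 := hη.dist_le_mul x y
    have e2 := hL.dist_le_mul x hx y hy
    rw [Real.dist_eq] at e1 e2
    calc |η x * f x - η y * f y| = |η x * (f x - f y) + f y * (η x - η y)| := by ring_nf
      _ ≤ |η x| * |f x - f y| + |f y| * |η x - η y| := by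
        rw [← abs_mul, ← abs_mul]
        exact abs_add_le _ _
      _ ≤ 1 * (L * dist x y) + B' * (K * dist x y) := by
        gcongr
        · rw [abs_of_nonneg (h0 x)]
          exact h1 x
        · exact hB' y hy
      _ = _ := by push_cast; ring
  · exact hone x y hx hy
  · rw [abs_sub_comm, dist_comm]
    exact hone y x hy hx
  · rw [hout x hx.le, hout y hy.le]
    simp only [zero_mul, sub_zero, abs_zero]
    positivity

namespace QBFL

/-- A function vanishing off a compact set `C` is approximable by Lipschitz functions supported
near `C`, if locally Lipschitz functions are dense. -/
lemma exists_lipschitz_near [BorelSpace P] [ProperSpace P] (X : QBFL P μ)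
    (hdens : ∀ u : P → EReal, X.memN1 u → ∀ ε : ℝ≥0∞, 0 < ε →
      ∃ f : P → ℝ, LocallyLipschitz f ∧ X.newt (fun x => u x - (f x : EReal)) < ε)
    {b : P → ℝ} (hb : Measurable b) (hbn : X.newt (fun x => (b x : EReal)) < ⊤) {C : Set P}
    (hC : IsCompact C) (hne : C.Nonempty) (hb0 : ∀ x ∉ C, b x = 0) {r : ℝ} (hr : 0 < r)
    (hχ : X.nrmE ({x | 0 < infDist x C ∧ infDist x C < r}.indicator 1) < ⊤)
    {ε : ℝ≥0∞} (hε : 0 < ε) :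
    ∃ f : P → ℝ, (∃ K : ℝ≥0, LipschitzWith K f) ∧ (∀ x, r ≤ infDist x C → f x = 0) ∧
      X.newt (fun x => ((b x - f x : ℝ) : EReal)) < ε := by
  obtain ⟨η, ⟨K, hηL⟩, hη0, hη1, hηC, hηout, hηU⟩ := exists_cutoff C hr
  set R : ℝ≥0 := Real.toNNReal r⁻¹ with hR
  have hRR : ENNReal.ofReal r⁻¹ = R := rfl
  rw [hRR] at hηU
  have hηfin : X.nrmE ({x | 0 < infDist x C ∧ infDist x C < r}.indicator fun _ => (R : ℝ≥0∞))
      < ⊤ := by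
    refine lt_of_le_of_lt (X.nrmE_mono fun x => ?_)
      (lt_of_eq_of_lt (X.nrmE_mul R _) (ENNReal.mul_lt_top ENNReal.coe_lt_top hχ))
    by_cases hx : x ∈ {x | 0 < infDist x C ∧ infDist x C < r} <;> simp [hx]
  obtain ⟨δ, hδ, hδε⟩ := exists_small_mul (K := 1 + X.cc * (X.cc * (1 + R))) (ε := ε)
    (ENNReal.add_ne_top.2 ⟨by simp, ENNReal.mul_ne_top X.cc_ne
      (ENNReal.mul_ne_top X.cc_ne (by simp))⟩) hε
  obtain ⟨f, hfL, hfn⟩ := hdens (fun x => (b x : EReal)) ⟨hb.coe_real_ereal, hbn⟩ δ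
    (by exact_mod_cast hδ)
  have hz : Measurable fun x => b x - f x := hb.sub hfL.continuous.measurable
  simp only [← EReal.coe_sub] at hfn
  obtain ⟨g, hgU, hgn⟩ := X.exists_of_grad_lt ((X.grad_le_newt _).trans_lt hfn)
  have hzn := (X.nrmE_le_newt _).trans_lt hfn
  have hmul := X.grad_mul hηL.continuous.measurable hz hηU hgU hηfin
    (hgn.trans ENNReal.coe_lt_top)
  have hηabs : ∀ x, ENNReal.ofReal |η x| ≤ 1 := by
    intro x
    rw [ENNReal.ofReal_le_one, abs_of_nonneg (hη0 x)]
    exact hη1 x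
  refine ⟨fun x => η x * f x, lipschitz_cutoff_mul hC hne hηL hη0 hη1 hηout hfL,
    fun x hx => by simp [hηout x hx], ?_⟩
  have hfun : (fun x => ((b x - η x * f x : ℝ) : EReal)) =
      fun x => ((η x * (b x - f x) : ℝ) : EReal) := by
    funext x
    by_cases hx : x ∈ C
    · rw [hηC x hx, one_mul, one_mul]
    · rw [hb0 x hx, zero_sub, zero_sub, mul_neg]
  rw [hfun, X.newt_eq]
  refine lt_of_le_of_lt (add_le_add (b := (δ : ℝ≥0∞)) (d := X.cc * (X.cc * (δ + R * δ))) ?_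
    (hmul.trans ?_)) (lt_of_eq_of_lt (by ring) hδε)
  · refine (X.nrmE_mono fun x => ?_).trans hzn.le
    rw [EReal.abs_def, EReal.abs_def, abs_mul, ENNReal.ofReal_mul (abs_nonneg _)]
    exact mul_le_of_le_one_left zero_le (hηabs x)
  · gcongr
    refine (X.nrmE_add _ _).trans ?_
    gcongr
    · refine (X.nrmE_mono fun x => ?_).trans hgn.le
      exact mul_le_of_le_one_left zero_le (hηabs x)
    · refine (X.nrmE_mono (g := fun x => (R : ℝ≥0∞) * ENNReal.ofReal |b x - f x|)
        fun x => ?_).trans ?_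
      · rw [mul_comm]
        gcongr
        exact indicator_le_self' (fun _ _ => zero_le) x
      · rw [X.nrmE_mul]
        gcongr
        exact hzn.le

end QBFL

/-! ### Approximation by compactly supported Lipschitz functions -/

/-- A triangle inequality that remains valid at infinite values. -/
lemma ereal_split (a a' : EReal) (b b' f f' : ℝ) :
    ((a - (f : EReal)) - (a' - (f' : EReal))).abs ≤
      ((a - (b : EReal)) - (a' - (b' : EReal))).abs + ENNReal.ofReal |(b - f) - (b' - f')| := by
  induction a with
  | bot => induction a' <;> simp [sub_eq_add_neg]
  | top =>
    induction a' with
    | bot => simp [sub_eq_add_neg]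
    | top => simp [sub_eq_add_neg]
    | coe a' =>
      rw [EReal.top_sub_coe, EReal.top_sub_coe, ← EReal.coe_sub, ← EReal.coe_sub,
        EReal.top_sub_coe, EReal.top_sub_coe, EReal.abs_top, top_add]
  | coe a =>
    induction a' with
    | bot => simp [sub_eq_add_neg]
    | top => simp [sub_eq_add_neg]
    | coe a' =>
      simp only [← EReal.coe_sub, EReal.abs_def]
      rw [← ENNReal.ofReal_add (abs_nonneg _) (abs_nonneg _)]
      refine ENNReal.ofReal_le_ofReal ?_
      have := abs_add_le (a - b - (a' - b')) ((b - f) - (b' - f'))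
      rwa [show a - b - (a' - b') + (b - f - (b' - f')) = a - f - (a' - f') by ring] at this

lemma IsUpperGradient.of_le {w w₁ : P → EReal} {g : P → ℝ≥0∞} (hg : IsUpperGradient w₁ g)
    (h : ∀ x y, (w x - w y).abs ≤ (w₁ x - w₁ y).abs) : IsUpperGradient w g :=
  ⟨hg.1, fun γ => (h _ _).trans (hg.2 γ)⟩

namespace QBFL

lemma newt_mono (X : QBFL P μ) {w w₁ : P → EReal} (h0 : ∀ x, (w x).abs ≤ (w₁ x).abs)
    (h : ∀ x y, (w x - w y).abs ≤ (w₁ x - w₁ y).abs) : X.newt w ≤ X.newt w₁ := by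
  rw [X.newt_eq, X.newt_eq]
  exact add_le_add (X.nrmE_mono h0) (le_iInf₂ fun g hg => X.grad_le (hg.of_le h))

lemma newt_zero (X : QBFL P μ) : X.newt (fun _ => (0 : EReal)) = 0 := by
  have h0 : X.nrmE (fun _ => 0) = 0 := X.nrmE_zero
  have hU : IsUpperGradient (fun _ : P => (0 : EReal)) fun _ => 0 :=
    ⟨measurable_const, fun γ => by simp⟩
  have h1 : X.grad (fun _ => (0 : EReal)) = 0 := le_antisymm ((X.grad_le hU).trans h0.le) zero_le
  rw [X.newt_eq, h1, add_zero]
  simpa using h0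

/-- `u` lies in the closure of the Lipschitz functions with compact support in `Ω`. -/
def Approx (X : QBFL P μ) (Ω : Set P) (u : P → EReal) : Prop :=
  ∀ ε : ℝ≥0∞, 0 < ε → ∃ f : P → ℝ, (∃ K : ℝ≥0, LipschitzWith K f) ∧ HasCompactSupport f ∧
    tsupport f ⊆ Ω ∧ X.newt (fun x => u x - (f x : EReal)) < ε

/-- The closure is closed. -/
lemma approx_of_approx [BorelSpace P] {X : QBFL P μ} {Ω : Set P} {u : P → EReal}
    (h : ∀ ε : ℝ≥0∞, 0 < ε → ∃ b : P → ℝ, X.Approx Ω (fun x => (b x : EReal)) ∧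
      X.newt (fun x => u x - (b x : EReal)) < ε) : X.Approx Ω u := by
  intro ε hε
  obtain ⟨δ, hδ, hδε⟩ := exists_small_mul (K := X.cc * 2) (ENNReal.mul_ne_top X.cc_ne (by simp)) hε
  have hδ' : (0 : ℝ≥0∞) < δ := by exact_mod_cast hδ
  obtain ⟨b, hb, hub⟩ := h δ hδ'
  obtain ⟨f, hfL, hfc, hfΩ, hfn⟩ := hb δ hδ'
  refine ⟨f, hfL, hfc, hfΩ, lt_of_le_of_lt (X.newt_triangle (w₁ := fun x => u x - (b x : EReal))
    (w₂ := fun x => (b x : EReal) - (f x : EReal)) (fun x => ?_) fun x y => ?_)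
    (lt_of_le_of_lt ?_ hδε)⟩
  · have := ereal_split (u x) 0 (b x) 0 (f x) 0
    simpa [abs_coe_sub_coe] using this
  · have := ereal_split (u x) (u y) (b x) (b y) (f x) (f y)
    simpa only [← EReal.coe_sub, EReal.abs_def] using this
  · rw [mul_assoc, two_mul]
    gcongr

/-- Functions vanishing off a compact subset of `Ω`. -/
lemma approx_of_compact [BorelSpace P] [ProperSpace P] {X : QBFL P μ}
    (hdens : ∀ u : P → EReal, X.memN1 u → ∀ ε : ℝ≥0∞, 0 < ε →
      ∃ f : P → ℝ, LocallyLipschitz f ∧ X.newt (fun x => u x - (f x : EReal)) < ε)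
    (hχ : ∀ A : Set P, MeasurableSet A → Bornology.IsBounded A → X.nrmE (A.indicator 1) < ⊤)
    {Ω : Set P} (hΩ : IsOpen Ω) {b : P → ℝ} (hb : Measurable b)
    (hbn : X.newt (fun x => (b x : EReal)) < ⊤) {C : Set P} (hC : IsCompact C) (hCΩ : C ⊆ Ω)
    (hb0 : ∀ x ∉ C, b x = 0) : X.Approx Ω fun x => (b x : EReal) := by
  intro ε hε
  rcases C.eq_empty_or_nonempty with hne | hne
  · have hb00 : ∀ x, b x = 0 := fun x => hb0 x (by simp [hne])
    refine ⟨fun _ => 0, ⟨0, LipschitzWith.const 0⟩, HasCompactSupport.zero, ?_, ?_⟩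
    · simp [tsupport]
    · simp only [hb00, EReal.coe_zero, sub_zero]
      rw [X.newt_zero]
      exact hε
  · obtain ⟨r, hr, hrΩ⟩ := hC.exists_cthickening_subset_open hΩ hCΩ
    have hcomp := isCompact_infDist_le hC hne r
    obtain ⟨f, hfL, hf0, hfn⟩ := X.exists_lipschitz_near hdens hb hbn hC hne hb0 hr
      (hχ _ ((isOpen_lt continuous_const (continuous_infDist_pt C)).measurableSet.inter
        (isOpen_lt (continuous_infDist_pt C) continuous_const).measurableSet)
        (hcomp.isBounded.subset fun x hx => hx.2.le)) hε
    have hts : tsupport f ⊆ {x | infDist x C ≤ r} := by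
      refine closure_minimal (fun x hx => ?_) hcomp.isClosed
      by_contra hcon
      exact hx (hf0 x (not_le.1 hcon).le)
    refine ⟨f, hfL, hcomp.of_isClosed_subset (isClosed_tsupport f) hts, fun x hx => hrΩ ?_, ?_⟩
    · obtain ⟨y, hy, hxy⟩ := hC.exists_infDist_eq_dist hne x
      exact mem_cthickening_of_dist_le x y r C hy (hxy ▸ hts hx)
    · simpa only [EReal.coe_sub] using hfn

/-- If `w` is small in `X` then so is `w · g`, by absolute continuity. -/
lemma exists_mul_small (X : QBFL P μ) (hAC : X.HasACNorm) {g : P → ℝ≥0∞} (hg : Measurable g)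
    (hfin : X.nrmE g < ⊤) {ε : ℝ≥0∞} (hε : 0 < ε) :
    ∃ δ : ℝ≥0, 0 < δ ∧ ∀ w : P → ℝ, Measurable w → (∀ x, 0 ≤ w x) → (∀ x, w x ≤ 1) →
      X.nrmE (fun x => ENNReal.ofReal |w x|) ≤ δ →
      X.nrmE (fun x => ENNReal.ofReal |w x| * g x) < ε := by
  have hε2 : 0 < ε / 2 := ENNReal.half_pos hε.ne'
  obtain ⟨σ, hσ, hσε⟩ := exists_small_mul (K := X.cc * X.nrmE g)
    (ENNReal.mul_ne_top X.cc_ne hfin.ne) hε2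
  obtain ⟨τ, hτ, hτε⟩ := exists_small_mul (K := X.cc) X.cc_ne hε2
  obtain ⟨δ, hδ, hδg⟩ := X.exists_delta hAC hg hfin (ε := τ) (by exact_mod_cast hτ)
  refine ⟨σ * δ, mul_pos hσ hδ, fun w hw h0 h1 hwn => ?_⟩
  have hA : MeasurableSet {x | (σ : ℝ) < w x} := measurableSet_lt measurable_const hw
  have hχ : X.nrmE ({x | (σ : ℝ) < w x}.indicator 1) ≤ δ := by
    refine (X.nrmE_mono (g := fun x => ((σ⁻¹ : ℝ≥0) : ℝ≥0∞) * ENNReal.ofReal |w x|)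
      fun x => ?_).trans ?_
    · by_cases hx : x ∈ {x | (σ : ℝ) < w x}
      · rw [indicator_of_mem hx, Pi.one_apply, ENNReal.coe_inv hσ.ne', mul_comm, ← div_eq_mul_inv,
          ENNReal.le_div_iff_mul_le (Or.inl (by exact_mod_cast hσ.ne'))
            (Or.inl ENNReal.coe_ne_top), one_mul, abs_of_nonneg (h0 x),
          ← ENNReal.ofReal_coe_nnreal]
        exact ENNReal.ofReal_le_ofReal (le_of_lt hx)
      · rw [indicator_of_notMem hx]
        exact zero_le
    · rw [X.nrmE_mul]
      refine (mul_le_mul_right hwn _).trans (le_of_eq ?_)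
      rw [← ENNReal.coe_mul, inv_mul_cancel_left₀ hσ.ne']
  calc X.nrmE (fun x => ENNReal.ofReal |w x| * g x)
      ≤ X.nrmE (fun x => σ * g x + {x | (σ : ℝ) < w x}.indicator g x) := by
        refine X.nrmE_mono fun x => ?_
        rw [abs_of_nonneg (h0 x)]
        by_cases hx : x ∈ {x | (σ : ℝ) < w x}
        · rw [indicator_of_mem hx]
          refine le_trans ?_ le_add_self
          exact mul_le_of_le_one_left zero_le (ENNReal.ofReal_le_one.2 (h1 x))
        · rw [indicator_of_notMem hx, add_zero]
          gcongr
          rw [← ENNReal.ofReal_coe_nnreal]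
          exact ENNReal.ofReal_le_ofReal (not_lt.1 hx)
    _ ≤ X.cc * (σ * X.nrmE g + τ) := by
        refine (X.nrmE_add _ _).trans ?_
        rw [X.nrmE_mul]
        gcongr
        exact (hδg _ hA hχ).le
    _ = X.cc * X.nrmE g * σ + X.cc * τ := by ring
    _ < ε / 2 + ε / 2 := ENNReal.add_lt_add hσε hτε
    _ = ε := ENNReal.add_halves ε

/-- Multiplication by a bounded Newtonian function `q` is continuous at `0` on functions with values
in `[0, 1]`. -/
lemma exists_newt_mul_small [BorelSpace P] (X : QBFL P μ) (hAC : X.HasACNorm) {q : P → ℝ}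
    (hq : Measurable q) {M : ℝ≥0} (hM : ∀ x, |q x| ≤ M)
    (hqn : X.newt (fun x => (q x : EReal)) < ⊤) {ε : ℝ≥0∞} (hε : 0 < ε) :
    ∃ δ : ℝ≥0, 0 < δ ∧ ∀ (w : P → ℝ) (ρ : P → ℝ≥0∞), Measurable w → (∀ x, 0 ≤ w x) →
      (∀ x, w x ≤ 1) → IsUpperGradient (fun x => (w x : EReal)) ρ →
      X.nrmE (fun x => ENNReal.ofReal |w x|) ≤ δ → X.nrmE ρ ≤ δ →
      X.newt (fun x => ((w x * q x : ℝ) : EReal)) < ε := by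
  obtain ⟨g, hgU, hgn⟩ := X.exists_of_grad_lt ((X.grad_le_newt _).trans_lt hqn)
  obtain ⟨τ, hτ, hτε⟩ := exists_small_mul (K := M + X.cc * (X.cc * (1 + M)))
    (ENNReal.add_ne_top.2 ⟨by simp, ENNReal.mul_ne_top X.cc_ne
      (ENNReal.mul_ne_top X.cc_ne (by simp))⟩) hε
  obtain ⟨δ, hδ, hδg⟩ := X.exists_mul_small hAC hgU.1 hgn (ε := τ) (by exact_mod_cast hτ)
  have hMq : ∀ x, ENNReal.ofReal |q x| ≤ M := fun x => by
    rw [← ENNReal.ofReal_coe_nnreal]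
    exact ENNReal.ofReal_le_ofReal (hM x)
  refine ⟨min δ τ, lt_min hδ hτ, fun w ρ hw h0 h1 hU hwn hρn => ?_⟩
  have hwn1 : X.nrmE (fun x => ENNReal.ofReal |w x|) ≤ δ :=
    hwn.trans (by exact_mod_cast min_le_left _ _)
  have hwn2 : X.nrmE (fun x => ENNReal.ofReal |w x|) ≤ τ :=
    hwn.trans (by exact_mod_cast min_le_right _ _)
  have hρn2 : X.nrmE ρ ≤ τ := hρn.trans (by exact_mod_cast min_le_right _ _)
  rw [X.newt_eq]
  refine lt_of_le_of_lt (add_le_add (b := (M : ℝ≥0∞) * τ) (d := X.cc * (X.cc * (τ + M * τ))) ?_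
    ((X.grad_mul hw hq hU hgU (hρn.trans_lt ENNReal.coe_lt_top) hgn).trans ?_))
    (lt_of_eq_of_lt (by ring) hτε)
  · refine (X.nrmE_mono (g := fun x => (M : ℝ≥0∞) * ENNReal.ofReal |w x|) fun x => ?_).trans ?_
    · rw [EReal.abs_def, abs_mul, ENNReal.ofReal_mul (abs_nonneg _), mul_comm]
      gcongr
      exact hMq x
    · rw [X.nrmE_mul]
      gcongr
  · gcongr
    refine (X.nrmE_add _ _).trans ?_
    gcongr
    · exact (hδg w hw h0 h1 hwn1).le
    · refine (X.nrmE_mono (g := fun x => (M : ℝ≥0∞) * ρ x) fun x => ?_).trans ?_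
      · gcongr
        exact hMq x
      · rw [X.nrmE_mul]
        gcongr

end QBFL

/-! ### Soft-thresholded functions -/

lemma real_isUpperGradient_of_le {φ b : P → ℝ} {g : P → ℝ≥0∞} {K : ℝ≥0}
    (hg : IsUpperGradient (fun x => (b x : EReal)) g)
    (h : ∀ x y, |φ x - φ y| ≤ K * |b x - b y|) :
    IsUpperGradient (fun x => (φ x : EReal)) fun x => K * g x := by
  refine ⟨hg.1.const_mul _, fun γ => ?_⟩
  rw [curveLint, lintegral_const_mul' _ _ ENNReal.coe_ne_top]
  refine le_trans ?_ (mul_le_mul_right (hg.2 γ) _)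
  rw [abs_coe_sub_coe, abs_coe_sub_coe, ← ENNReal.ofReal_coe_nnreal,
    ← ENNReal.ofReal_mul K.coe_nonneg]
  exact ENNReal.ofReal_le_ofReal (h _ _)

lemma abs_min_sub_le {c y z : ℝ} : |min c y - min c z| ≤ |y - z| := by
  simpa using abs_min_sub_min_le_max c y c z

lemma abs_max_sub_le {c y z : ℝ} : |max c y - max c z| ≤ |y - z| := by
  simpa using abs_max_sub_max_le_max c y c z

/-- Subtracting the truncation at level `e` is a contraction. -/
lemma abs_soft_sub_le {e : ℝ} (he : 0 ≤ e) (y y' : ℝ) :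
    |(y - max (-e) (min e y)) - (y' - max (-e) (min e y'))| ≤ |y - y'| := by
  rw [abs_le]
  have := neg_abs_le (y - y')
  have := le_abs_self (y - y')
  constructor <;> grind

namespace QBFL

section
variable [BorelSpace P] [ProperSpace P] [μ.OuterRegular] [IsFiniteMeasureOnCompacts μ]
  {X : QBFL P μ}

/-- The part of `b` above level `e` is approximable. Approximate `b` by a continuous `f`; off the
set where a capacitary majorant `u` of `b - f` is large, `f` controls the support of the
soft-thresholded function, so that this support lies in a compact subset of `Ω`. -/
lemma approx_soft (hAC : X.HasACNorm)
    (hdens : ∀ u : P → EReal, X.memN1 u → ∀ ε : ℝ≥0∞, 0 < ε →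
      ∃ f : P → ℝ, LocallyLipschitz f ∧ X.newt (fun x => u x - (f x : EReal)) < ε)
    (hχ : ∀ A : Set P, MeasurableSet A → Bornology.IsBounded A → X.nrmE (A.indicator 1) < ⊤)
    {Ω : Set P} (hΩ : IsOpen Ω) {b : P → ℝ} (hb : Measurable b)
    (hbn : X.newt (fun x => (b x : EReal)) < ⊤) {M : ℝ≥0} (hM : ∀ x, |b x| ≤ M)
    (hbΩ : ∀ x ∉ Ω, b x = 0) {x₀ : P} {R : ℝ} (hR : 0 ≤ R) (hbR : ∀ x ∉ closedBall x₀ R, b x = 0)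
    {e : ℝ} (he : 0 < e) :
    X.Approx Ω fun x => ((b x - max (-e) (min e (b x)) : ℝ) : EReal) := by
  set q : P → ℝ := fun x => b x - max (-e) (min e (b x)) with hq
  have hqm : Measurable q := hb.sub (measurable_const.max (measurable_const.min hb))
  have hqb : ∀ x, |q x| ≤ |b x| := by
    intro x
    have := abs_soft_sub_le he.le (b x) 0
    have h0 : max (-e) (min e 0) = 0 := by
      rw [min_eq_right he.le, max_eq_right (by linarith)]
    rwa [h0, sub_zero, sub_zero, sub_zero] at this
  have hqM : ∀ x, |q x| ≤ M := fun x => (hqb x).trans (hM x)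
  have hqn : X.newt (fun x => (q x : EReal)) < ⊤ := by
    refine lt_of_le_of_lt (X.newt_mono (fun x => ?_) fun x y => ?_) hbn
    · rw [EReal.abs_def, EReal.abs_def]
      exact ENNReal.ofReal_le_ofReal (hqb x)
    · rw [abs_coe_sub_coe, abs_coe_sub_coe]
      exact ENNReal.ofReal_le_ofReal (abs_soft_sub_le he.le _ _)
  have hqe : ∀ x, q x ≠ 0 → e ≤ |b x| := by
    intro x hx
    by_contra hcon
    have := abs_lt.1 (not_le.1 hcon)
    refine hx ?_
    simp only [hq]
    rw [min_eq_right this.2.le, max_eq_right this.1.le, sub_self]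
  refine approx_of_approx fun ε hε => ?_
  obtain ⟨δ, hδ, hδw⟩ := X.exists_newt_mul_small hAC hqm hqM hqn hε
  -- `a = 2 / e` is the scaling making `|b - f| ≤ e / 4` on `{u ≤ 1 / 2}`
  set a : ℝ≥0 := Real.toNNReal (2 / e) with ha
  have haR : (a : ℝ) = 2 / e := Real.coe_toNNReal _ (by positivity)
  obtain ⟨τ, hτ, hτδ⟩ := exists_small_mul (K := 2 * (X.cc ^ 2 * a + 1)) (ε := δ)
    (ENNReal.mul_ne_top (by simp) (ENNReal.add_ne_top.2 ⟨ENNReal.mul_ne_top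
      (ENNReal.pow_ne_top X.cc_ne) (by simp), by simp⟩)) (by exact_mod_cast hδ)
  have hτ' : (0 : ℝ≥0∞) < τ := by exact_mod_cast hτ
  set B := closedBall x₀ R
  have hB : IsCompact B := isCompact_closedBall _ _
  have hBne : B.Nonempty := ⟨x₀, mem_closedBall_self hR⟩
  have hcomp := isCompact_infDist_le hB hBne 1
  obtain ⟨f, ⟨K, hfL⟩, hf0, hfn⟩ := X.exists_lipschitz_near hdens hb hbn hB hBne hbR one_pos
    (hχ _ ((isOpen_lt continuous_const (continuous_infDist_pt B)).measurableSet.inter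
        (isOpen_lt (continuous_infDist_pt B) continuous_const).measurableSet)
        (hcomp.isBounded.subset fun x hx => hx.2.le)) hτ'
  obtain ⟨g, hgU, hgn⟩ := X.exists_of_grad_lt ((X.grad_le_newt _).trans_lt hfn)
  have hzn := (X.nrmE_le_newt _).trans_lt hfn
  have hVo : IsOpen {x | infDist x B < 1} := isOpen_lt (continuous_infDist_pt B) continuous_const
  have hVB : {x | infDist x B < 1} ⊆ {x | infDist x B ≤ 1} := by
    intro x (hx : infDist x B < 1)
    exact hx.le
  have hzU : IsUpperGradient (fun x => ((a * (b x - f x) : ℝ) : EReal)) fun x => a * g x :=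
    real_isUpperGradient_of_le hgU fun x y => by
      rw [← mul_sub, abs_mul, abs_of_nonneg a.coe_nonneg]
  obtain ⟨u, ρ, hu0, hu1, hucl, huz, huU, hρn, hun⟩ := X.exists_cap hAC hVo
    ((measure_mono hVB).trans_lt hcomp.measure_lt_top).ne
    (hχ _ hVo.measurableSet (hcomp.isBounded.subset hVB))
    (z := fun x => a * (b x - f x)) ((hb.sub hfL.continuous.measurable).const_mul _)
    (fun x hx => by
      have h1 : 1 ≤ infDist x B := not_lt.1 hx
      have h2 : b x = 0 := hbR x fun hxB => by
        rw [infDist_zero_of_mem hxB] at h1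
        linarith
      simp [h2, hf0 x h1]) hzU hτ'
  have hum : Measurable u := by
    refine measurable_of_Iic fun s => ?_
    rcases lt_or_ge s 1 with hs | hs
    · exact (hucl s hs).measurableSet
    · convert MeasurableSet.univ
      ext x
      simpa using (hu1 x).trans hs
  have hsmall : (2 : ℝ≥0∞) * (X.cc ^ 2 * (a * τ) + τ) ≤ δ := by
    refine le_of_eq_of_le ?_ hτδ.le
    ring
  have hw0 : ∀ x, 0 ≤ min 1 (2 * u x) := fun x =>
    le_min zero_le_one (mul_nonneg zero_le_two (hu0 x))
  have hwsmall := hδw (fun x => min 1 (2 * u x)) (fun x => ((2 : ℝ≥0) : ℝ≥0∞) * ρ x)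
    (measurable_const.min (hum.const_mul 2)) hw0
    (fun x => min_le_left _ _)
    (real_isUpperGradient_of_le huU fun x y => by
      refine abs_min_sub_le.trans (le_of_eq ?_)
      rw [← mul_sub, abs_mul]
      simp)
    (by
      refine le_trans ?_ hsmall
      refine (X.nrmE_mono (g := fun x => ((2 : ℝ≥0) : ℝ≥0∞) * ENNReal.ofReal |u x|)
        fun x => ?_).trans ?_
      · rw [abs_of_nonneg (hw0 x), abs_of_nonneg (hu0 x)]
        refine (ENNReal.ofReal_le_ofReal (min_le_right _ _)).trans ?_
        rw [ENNReal.ofReal_mul zero_le_two]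
        simp
      · rw [X.nrmE_mul]
        push_cast
        gcongr
        refine hun.trans ?_
        gcongr
        refine le_trans (X.nrmE_mono (g := fun x => (a : ℝ≥0∞) * ENNReal.ofReal |b x - f x|)
          fun x => ?_) ?_
        · rw [abs_mul, abs_of_nonneg a.coe_nonneg, ENNReal.ofReal_mul a.coe_nonneg,
            ENNReal.ofReal_coe_nnreal]
        · rw [X.nrmE_mul]
          gcongr
          exact hzn.le)
    (by
      rw [X.nrmE_mul]
      refine le_trans ?_ hsmall
      push_cast
      gcongr
      refine hρn.trans ?_
      rw [X.nrmE_mul]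
      gcongr)
  -- the factor `1 - min 1 (2 u)` kills `q` on `{u > 1 / 2}`
  refine ⟨fun x => q x - min 1 (2 * u x) * q x, ?_, ?_⟩
  · refine approx_of_compact hdens hχ hΩ
      (hqm.sub ((measurable_const.min (hum.const_mul 2)).mul hqm)) ?_
      (C := {x | u x ≤ 1 / 2} ∩ {x | 3 * e / 4 ≤ |f x|}) ?_ ?_ ?_
    · refine lt_of_le_of_lt (X.newt_triangle (w₁ := fun x => (q x : EReal))
        (w₂ := fun x => ((min 1 (2 * u x) * q x : ℝ) : EReal)) (fun x => ?_) fun x y => ?_)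
        (ENNReal.mul_lt_top X.cc_lt_top (ENNReal.add_lt_top.2 ⟨hqn, hwsmall.trans_le le_top⟩))
      · simp only [EReal.abs_def]
        rw [← ENNReal.ofReal_add (abs_nonneg _) (abs_nonneg _)]
        exact ENNReal.ofReal_le_ofReal (abs_sub _ _)
      · simp only [abs_coe_sub_coe]
        rw [← ENNReal.ofReal_add (abs_nonneg _) (abs_nonneg _)]
        refine ENNReal.ofReal_le_ofReal ?_
        refine le_of_eq_of_le ?_ (abs_sub _ _)
        congr 1
        ring
    all_goals
      have hkey : ∀ x, u x ≤ 1 / 2 → |b x - f x| ≤ e / 4 := by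
        intro x hx
        have h1 := (huz x).trans hx
        rcases min_le_iff.1 h1 with h1 | h1
        · norm_num at h1
        · rw [abs_mul, abs_of_nonneg a.coe_nonneg, haR, div_mul_eq_mul_div,
            div_le_iff₀ he] at h1
          linarith
      have hCb : ∀ x ∈ {x | u x ≤ 1 / 2} ∩ {x | 3 * e / 4 ≤ |f x|}, b x ≠ 0 := by
        rintro x ⟨h1, h2⟩ h3
        have h4 := hkey x h1
        rw [h3, zero_sub, abs_neg] at h4
        have h5 : 3 * e / 4 ≤ |f x| := h2
        linarith
    · refine hB.of_isClosed_subset ((hucl _ (by norm_num)).inter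
        (isClosed_le continuous_const hfL.continuous.abs)) fun x hx => ?_
      by_contra hcon
      exact hCb x hx (hbR x hcon)
    · intro x hx
      by_contra hcon
      exact hCb x hx (hbΩ x hcon)
    · intro x hx
      by_contra hcon
      have hq0 : q x ≠ 0 := by
        intro h
        simp [h] at hcon
      have hux : u x ≤ 1 / 2 := by
        by_contra hux
        rw [min_eq_left (by linarith)] at hcon
        simp at hcon
      refine hx ⟨hux, ?_⟩
      have h1 := hkey x hux
      have h2 := hqe x hq0
      have h3 := abs_sub_abs_le_abs_sub (b x) (f x)
      change 3 * e / 4 ≤ |f x|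
      linarith
  · convert hwsmall using 3
    rw [← EReal.coe_sub]
    congr 1
    ring

end

end QBFL

/-! ### Bounded functions vanishing outside `Ω` -/

namespace QBFL

section
variable [BorelSpace P] [ProperSpace P] [μ.OuterRegular] [IsFiniteMeasureOnCompacts μ]
  {X : QBFL P μ}

lemma clampE_coe (p r y : ℝ) : clampE p r y = ((max p (min r y) : ℝ) : EReal) := by
  rw [clampE, ← EReal.coe_strictMono.monotone.map_min, ← EReal.coe_strictMono.monotone.map_max]

/-- Bounded functions with bounded support: let the threshold `e` of `approx_soft` tend to `0`.
The truncations at level `e` tend to zero since their gradients live on `{0 < |b| < e}`. -/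
lemma approx_of_bounded_support (hAC : X.HasACNorm)
    (hdens : ∀ u : P → EReal, X.memN1 u → ∀ ε : ℝ≥0∞, 0 < ε →
      ∃ f : P → ℝ, LocallyLipschitz f ∧ X.newt (fun x => u x - (f x : EReal)) < ε)
    (hχ : ∀ A : Set P, MeasurableSet A → Bornology.IsBounded A → X.nrmE (A.indicator 1) < ⊤)
    {Ω : Set P} (hΩ : IsOpen Ω) {b : P → ℝ} (hb : Measurable b)
    (hbn : X.newt (fun x => (b x : EReal)) < ⊤) {M : ℝ≥0} (hM : ∀ x, |b x| ≤ M)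
    (hbΩ : ∀ x ∉ Ω, b x = 0) {x₀ : P} {R : ℝ} (hR : 0 ≤ R)
    (hbR : ∀ x ∉ closedBall x₀ R, b x = 0) : X.Approx Ω fun x => (b x : EReal) := by
  refine approx_of_approx fun ε hε => ?_
  obtain ⟨g, hgU, hgn⟩ := X.exists_of_grad_lt ((X.grad_le_newt _).trans_lt hbn)
  have hBn := hχ (closedBall x₀ R) isClosed_closedBall.measurableSet isBounded_closedBall
  set N := X.nrmE ((closedBall x₀ R).indicator 1)
  obtain ⟨τ, hτ, hτε⟩ := exists_small_mul (K := N + X.cc * (X.cc + X.cc))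
    (ENNReal.add_ne_top.2 ⟨hBn.ne, ENNReal.mul_ne_top X.cc_ne
      (ENNReal.add_ne_top.2 ⟨X.cc_ne, X.cc_ne⟩)⟩) hε
  have hτ' : (0 : ℝ≥0∞) < τ := by exact_mod_cast hτ
  set E : ℕ → Set P := fun n => {x | 0 < |b x| ∧ |b x| < 1 / ((n : ℝ) + 1)} with hE
  have hEm : ∀ n, MeasurableSet (E n) := fun n =>
    (measurableSet_lt measurable_const hb.abs).inter (measurableSet_lt hb.abs measurable_const)
  have hEanti : Antitone E := fun m n hmn x hx =>
    ⟨hx.1, hx.2.trans_le (one_div_le_one_div_of_le (by positivity) (by gcongr))⟩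
  have hE0 : μ (⋂ n, E n) = 0 := by
    convert measure_empty (μ := μ)
    ext x
    simp only [mem_iInter, mem_empty_iff_false, iff_false]
    intro hx
    obtain ⟨n, hn⟩ := exists_nat_one_div_lt (hx 0).1
    exact absurd (hx n).2 (not_lt.2 hn.le)
  obtain ⟨n, hn1, hn2⟩ := ((X.exists_indicator_lt hAC hgU.1 hgn hEm hEanti hE0 hτ').and
    ((tendsto_one_div_add_atTop_nhds_zero_nat (𝕜 := ℝ)).eventually
      (gt_mem_nhds (show (0 : ℝ) < τ from hτ)))).exists
  set e : ℝ := 1 / ((n : ℝ) + 1) with hedef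
  have he : 0 < e := by positivity
  refine ⟨_, approx_soft hAC hdens hχ hΩ hb hbn hM hbΩ hR hbR he, ?_⟩
  have hfun : (fun x => (b x : EReal) - ((b x - max (-e) (min e (b x)) : ℝ) : EReal)) =
      fun x => ((max (-e) (min e (b x)) : ℝ) : EReal) := by
    funext x
    rw [← EReal.coe_sub]
    congr 1
    ring
  rw [hfun, X.newt_eq]
  have hcl : ∀ p r : ℝ, (∀ y : ℝ, p < y ∧ y < r → 0 < |y| ∧ |y| < e) →
      X.grad (fun x => ((max p (min r (b x)) : ℝ) : EReal)) ≤ X.cc * τ := by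
    intro p r hpr
    have h := X.grad_clampE hb.coe_real_ereal hgU hgn (EReal.coe_ne_top p) (EReal.coe_ne_bot r)
    simp only [clampE_coe] at h
    refine h.trans ?_
    gcongr
    refine (X.nrmE_mono fun x => ?_).trans hn1.le
    refine indicator_le_indicator_of_subset (fun y hy => ?_) (fun _ => zero_le) x
    exact hpr (b y) ⟨EReal.coe_lt_coe_iff.1 hy.1, EReal.coe_lt_coe_iff.1 hy.2⟩
  have hgrad := X.grad_triangle (w := fun x => ((max (-e) (min e (b x)) : ℝ) : EReal))
    (w₁ := fun x => ((max (-e) (min 0 (b x)) : ℝ) : EReal))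
    (w₂ := fun x => ((max 0 (min e (b x)) : ℝ) : EReal)) (fun x y => by
      simp only [abs_coe_sub_coe]
      rw [← ENNReal.ofReal_add (abs_nonneg _) (abs_nonneg _)]
      refine ENNReal.ofReal_le_ofReal ?_
      have hs : ∀ y, max (-e) (min e y) = max (-e) (min 0 y) + max 0 (min e y) := by
        intro y
        grind
      rw [hs, hs, add_sub_add_comm]
      exact abs_add_le _ _)
  refine lt_of_le_of_lt (add_le_add (b := N * τ) (d := X.cc * (X.cc * τ + X.cc * τ)) ?_
    (hgrad.trans ?_)) (lt_of_eq_of_lt (by ring) hτε)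
  · refine (X.nrmE_mono (g := fun x => (τ : ℝ≥0∞) * (closedBall x₀ R).indicator 1 x)
      fun x => ?_).trans ?_
    · rw [EReal.abs_def]
      by_cases hx : x ∈ closedBall x₀ R
      · rw [indicator_of_mem hx, Pi.one_apply, mul_one, ← ENNReal.ofReal_coe_nnreal]
        refine ENNReal.ofReal_le_ofReal (le_trans ?_ hn2.le)
        rw [abs_le]
        exact ⟨le_max_left _ _, max_le (by linarith) (min_le_left _ _)⟩
      · rw [hbR x hx, min_eq_right he.le, max_eq_right (by linarith)]
        simp
    · rw [X.nrmE_mul, mul_comm]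
  · gcongr
    · refine hcl _ _ fun y hy => ?_
      rw [abs_of_neg hy.2]
      exact ⟨by linarith [hy.2], by linarith [hy.1]⟩
    · refine hcl _ _ fun y hy => ?_
      rw [abs_of_pos hy.1]
      exact hy

/-- Bounded functions: multiply by cutoffs of large balls. -/
lemma approx_of_bounded (hAC : X.HasACNorm)
    (hdens : ∀ u : P → EReal, X.memN1 u → ∀ ε : ℝ≥0∞, 0 < ε →
      ∃ f : P → ℝ, LocallyLipschitz f ∧ X.newt (fun x => u x - (f x : EReal)) < ε)
    (hχ : ∀ A : Set P, MeasurableSet A → Bornology.IsBounded A → X.nrmE (A.indicator 1) < ⊤)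
    {Ω : Set P} (hΩ : IsOpen Ω) {b : P → ℝ} (hb : Measurable b)
    (hbn : X.newt (fun x => (b x : EReal)) < ⊤) {M : ℝ≥0} (hM : ∀ x, |b x| ≤ M)
    (hbΩ : ∀ x ∉ Ω, b x = 0) (x₀ : P) : X.Approx Ω fun x => (b x : EReal) := by
  refine approx_of_approx fun ε hε => ?_
  obtain ⟨g, hgU, hgn⟩ := X.exists_of_grad_lt ((X.grad_le_newt _).trans_lt hbn)
  have hbn' := (X.nrmE_le_newt _).trans_lt hbn
  simp only [EReal.abs_def] at hbn'
  set G : P → ℝ≥0∞ := fun x => g x + ENNReal.ofReal |b x| with hG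
  have hGm : Measurable G := hgU.1.add hb.abs.ennreal_ofReal
  have hGn : X.nrmE G < ⊤ := (X.nrmE_add _ _).trans_lt
    (ENNReal.mul_lt_top X.cc_lt_top (ENNReal.add_lt_top.2 ⟨hgn, hbn'⟩))
  obtain ⟨τ, hτ, hτε⟩ := exists_small_mul (K := 1 + X.cc)
    (ENNReal.add_ne_top.2 ⟨by simp, X.cc_ne⟩) hε
  set E : ℕ → Set P := fun n => (closedBall x₀ n)ᶜ with hE
  have hEm : ∀ n, MeasurableSet (E n) := fun n => isClosed_closedBall.measurableSet.compl
  have hEanti : Antitone E := fun m n hmn =>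
    compl_subset_compl.2 (closedBall_subset_closedBall (by exact_mod_cast hmn))
  have hE0 : μ (⋂ n, E n) = 0 := by
    convert measure_empty (μ := μ)
    ext x
    simp only [mem_iInter, mem_empty_iff_false, iff_false]
    intro hx
    obtain ⟨n, hn⟩ := exists_nat_ge (dist x x₀)
    exact hx n hn
  obtain ⟨n, hn⟩ := (X.exists_indicator_lt hAC hGm hGn hEm hEanti hE0
    (show (0 : ℝ≥0∞) < τ by exact_mod_cast hτ)).exists
  obtain ⟨η, ⟨K, hηL⟩, hη0, hη1, hηC, hηout, hηU⟩ :=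
    exists_cutoff (closedBall x₀ (n : ℝ)) one_pos
  set L := {x | 0 < infDist x (closedBall x₀ (n : ℝ)) ∧ infDist x (closedBall x₀ (n : ℝ)) < 1}
    with hL
  have hne : (closedBall x₀ (n : ℝ)).Nonempty := ⟨x₀, mem_closedBall_self (by positivity)⟩
  have hLE : ∀ x ∈ L, x ∈ E n := by
    intro x hx hxB
    exact hx.1.ne' (infDist_zero_of_mem hxB)
  have hζU : IsUpperGradient (fun x => ((1 - η x : ℝ) : EReal)) (L.indicator 1) := by
    have h1 : L.indicator (fun _ => ENNReal.ofReal (1 : ℝ)⁻¹) = L.indicator 1 := by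
      simp [Pi.one_def]
    rw [h1] at hηU
    refine hηU.of_le fun x y => ?_
    rw [abs_coe_sub_coe, abs_coe_sub_coe, abs_sub_comm (η x)]
    simp
  have hLm : MeasurableSet L :=
    (isOpen_lt continuous_const (continuous_infDist_pt _)).measurableSet.inter
      (isOpen_lt (continuous_infDist_pt _) continuous_const).measurableSet
  have hLn : X.nrmE (L.indicator 1) < ⊤ := hχ L hLm
    ((isCompact_infDist_le (isCompact_closedBall _ _) hne 1).isBounded.subset
      fun x hx => hx.2.le)
  have hgr := X.grad_mul (η := fun x => 1 - η x) (measurable_const.sub hηL.continuous.measurable) hb hζU hgU hLn hgn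
  have hζ : ∀ x, ENNReal.ofReal |1 - η x| ≤ 1 := by
    intro x
    rw [ENNReal.ofReal_le_one, abs_of_nonneg (by linarith [hη1 x])]
    linarith [hη0 x]
  have hsmall : X.newt (fun x => (((1 - η x) * b x : ℝ) : EReal)) < ε := by
    rw [X.newt_eq]
    refine lt_of_le_of_lt (add_le_add (b := (τ : ℝ≥0∞)) (d := X.cc * τ) ?_
      (hgr.trans ?_)) (lt_of_eq_of_lt (by ring) hτε)
    · refine (X.nrmE_mono fun x => ?_).trans hn.le
      rw [EReal.abs_def, abs_mul, ENNReal.ofReal_mul (abs_nonneg _)]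
      by_cases hx : x ∈ E n
      · rw [indicator_of_mem hx]
        exact (mul_le_of_le_one_left zero_le (hζ x)).trans le_add_self
      · rw [hηC x (not_not.1 hx)]
        simp
    · gcongr
      refine (X.nrmE_mono fun x => ?_).trans hn.le
      by_cases hx : x ∈ E n
      · rw [indicator_of_mem hx]
        refine add_le_add (mul_le_of_le_one_left zero_le (hζ x))
          (mul_le_of_le_one_right zero_le ?_)
        exact indicator_le_self' (fun _ _ => zero_le) x
      · have hxL : x ∉ L := fun h => hx (hLE x h)
        rw [hηC x (not_not.1 hx), indicator_of_notMem hxL]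
        simp
  refine ⟨fun x => η x * b x, ?_, ?_⟩
  · refine approx_of_bounded_support hAC hdens hχ hΩ (hηL.continuous.measurable.mul hb) ?_
      (M := M) (fun x => ?_) (fun x hx => by simp [hbΩ x hx]) (x₀ := x₀) (R := n + 1)
      (by positivity) fun x hx => ?_
    · refine lt_of_le_of_lt (X.newt_triangle (w₁ := fun x => (b x : EReal))
        (w₂ := fun x => (((1 - η x) * b x : ℝ) : EReal)) (fun x => ?_) fun x y => ?_)
        (ENNReal.mul_lt_top X.cc_lt_top (ENNReal.add_lt_top.2 ⟨hbn, hsmall.trans_le le_top⟩))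
      · simp only [EReal.abs_def]
        rw [← ENNReal.ofReal_add (abs_nonneg _) (abs_nonneg _)]
        refine ENNReal.ofReal_le_ofReal (le_of_eq_of_le ?_ (abs_sub _ _))
        congr 1
        ring
      · simp only [abs_coe_sub_coe]
        rw [← ENNReal.ofReal_add (abs_nonneg _) (abs_nonneg _)]
        refine ENNReal.ofReal_le_ofReal (le_of_eq_of_le ?_ (abs_sub _ _))
        congr 1
        ring
    · rw [abs_mul, abs_of_nonneg (hη0 x)]
      exact (mul_le_of_le_one_left (abs_nonneg _) (hη1 x)).trans (hM x)
    · rw [hηout x, zero_mul]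
      by_contra hcon
      obtain ⟨y, hy, hxy⟩ := (infDist_lt_iff hne).1 (not_le.1 hcon)
      refine hx ?_
      rw [mem_closedBall] at hy ⊢
      linarith [dist_triangle x y x₀]
  · convert hsmall using 3
    rw [← EReal.coe_sub]
    congr 1
    ring

end

end QBFL

/-! ### Unbounded functions -/

lemma abs_clamp_sub_le {n : ℝ} (hn : 0 ≤ n) (a a' : EReal) :
    ENNReal.ofReal |(clampE (-n : ℝ) n a).toReal - (clampE (-n : ℝ) n a').toReal| ≤
      (a - a').abs := by
  induction a with
  | bot => induction a' <;> simp [sub_eq_add_neg]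
  | top => induction a' <;> simp [sub_eq_add_neg]
  | coe a =>
    induction a' with
    | bot => simp [sub_eq_add_neg]
    | top => simp [sub_eq_add_neg]
    | coe a' =>
      rw [QBFL.clampE_coe, QBFL.clampE_coe, EReal.toReal_coe, EReal.toReal_coe, abs_coe_sub_coe]
      exact ENNReal.ofReal_le_ofReal (by grind)

lemma abs_clamp_le {n : ℝ} (hn : 0 ≤ n) (a : EReal) :
    |(clampE (-n : ℝ) n a).toReal| ≤ n := by
  induction a with
  | bot =>
    simp [clampE, abs_of_nonneg hn]
  | top =>
    rw [clampE, min_eq_left le_top, max_eq_right (by exact_mod_cast (by linarith : -n ≤ n))]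
    simp [abs_of_nonneg hn]
  | coe a =>
    rw [QBFL.clampE_coe, EReal.toReal_coe]
    grind

/-- The remainder of the truncation at level `n` is controlled by the parts of the function above
`n` and below `-n`. -/
lemma abs_sub_clamp_sub_le {n : ℝ} (hn : 0 ≤ n) (a a' : EReal) :
    ((a - ((clampE (-n : ℝ) n a).toReal : EReal)) -
      (a' - ((clampE (-n : ℝ) n a').toReal : EReal))).abs ≤
      (clampE n ⊤ a - clampE n ⊤ a').abs + (clampE ⊥ (-n : ℝ) a - clampE ⊥ (-n : ℝ) a').abs := by
  have h1 : ∀ y : ℝ, clampE n ⊤ y = ((max n y : ℝ) : EReal) := fun y => by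
    rw [clampE, min_eq_right le_top, EReal.coe_strictMono.monotone.map_max]
  have h2 : ∀ y : ℝ, clampE ⊥ (-n : ℝ) y = ((min (-n) y : ℝ) : EReal) := fun y => by
    rw [clampE, max_eq_right bot_le, EReal.coe_strictMono.monotone.map_min]
  induction a with
  | bot => simp [sub_eq_add_neg, clampE]
  | top =>
    induction a' with
    | bot => simp [sub_eq_add_neg, clampE]
    | top => simp [sub_eq_add_neg, clampE]
    | coe a' => rw [h1, h2]; simp [sub_eq_add_neg, clampE]
  | coe a =>
    induction a' with
    | bot => rw [h1, h2]; simp [sub_eq_add_neg, clampE]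
    | top => rw [h1, h2]; simp [sub_eq_add_neg, clampE]
    | coe a' =>
      rw [QBFL.clampE_coe, QBFL.clampE_coe, EReal.toReal_coe, EReal.toReal_coe, h1, h1, h2, h2]
      simp only [← EReal.coe_sub, EReal.abs_def]
      rw [← ENNReal.ofReal_add (abs_nonneg _) (abs_nonneg _)]
      refine ENNReal.ofReal_le_ofReal ?_
      have hs : ∀ y : ℝ, y - max (-n) (min n y) = (max n y - n) + (min (-n) y + n) := by
        intro y
        grind
      rw [hs, hs]
      refine le_of_eq_of_le ?_ (abs_add_le _ _)
      congr 1
      ring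

lemma abs_sub_clamp_le {n : ℝ} (hn : 0 ≤ n) (a : EReal) :
    (a - ((clampE (-n : ℝ) n a).toReal : EReal)).abs ≤ a.abs := by
  induction a with
  | bot => simp
  | top => simp
  | coe a =>
    rw [QBFL.clampE_coe, EReal.toReal_coe, ← EReal.coe_sub, EReal.abs_def, EReal.abs_def]
    exact ENNReal.ofReal_le_ofReal (by grind)

lemma abs_sub_clamp_eq_zero {n : ℝ} (hn : 0 ≤ n) {a : EReal} (h : a.abs ≤ ENNReal.ofReal n) :
    (a - ((clampE (-n : ℝ) n a).toReal : EReal)).abs = 0 := by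
  induction a with
  | bot => simp at h
  | top => simp at h
  | coe a =>
    rw [EReal.abs_def, ENNReal.ofReal_le_ofReal_iff hn] at h
    have : max (-n) (min n a) = a := by grind
    rw [QBFL.clampE_coe, this, EReal.toReal_coe, ← EReal.coe_sub]
    simp

lemma lt_abs_of_lt {n : ℝ} (hn : 0 ≤ n) {a : EReal} (h : (n : EReal) < a ∨ a < (-n : ℝ)) :
    ENNReal.ofReal n < a.abs := by
  induction a with
  | bot => simp
  | top => simp
  | coe a =>
    rw [EReal.coe_lt_coe_iff, EReal.coe_lt_coe_iff] at h
    rw [EReal.abs_def, ENNReal.ofReal_lt_ofReal_iff_of_nonneg hn]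
    grind

namespace QBFL

section
variable [BorelSpace P] [ProperSpace P] [μ.OuterRegular] [IsFiniteMeasureOnCompacts μ]
  {X : QBFL P μ}

/-- Truncation at the levels `±n` reduces the approximation to bounded functions. The errors are
controlled by the restrictions of `|v|` and of an upper gradient to the sets `{|v| > n}`, which
decrease to a null set. -/
lemma approx_of_memN1 (hAC : X.HasACNorm)
    (hdens : ∀ u : P → EReal, X.memN1 u → ∀ ε : ℝ≥0∞, 0 < ε →
      ∃ f : P → ℝ, LocallyLipschitz f ∧ X.newt (fun x => u x - (f x : EReal)) < ε)
    (hχ : ∀ A : Set P, MeasurableSet A → Bornology.IsBounded A → X.nrmE (A.indicator 1) < ⊤)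
    {Ω : Set P} (hΩ : IsOpen Ω) {v : P → EReal} (hv : X.memN1 v)
    (hvΩ : ∀ x ∉ Ω, v x = 0) (x₀ : P) : X.Approx Ω v := by
  refine approx_of_approx fun ε hε => ?_
  obtain ⟨g, hgU, hgn⟩ := X.exists_of_grad_lt ((X.grad_le_newt _).trans_lt hv.2)
  have hvn := (X.nrmE_le_newt _).trans_lt hv.2
  have hvm : Measurable fun x => (v x).abs := measurable_abs'.comp hv.1
  obtain ⟨τ, hτ, hτε⟩ := exists_small_mul (K := 1 + X.cc * (X.cc + X.cc))
    (ENNReal.add_ne_top.2 ⟨by simp, ENNReal.mul_ne_top X.cc_ne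
      (ENNReal.add_ne_top.2 ⟨X.cc_ne, X.cc_ne⟩)⟩) hε
  have hτ' : (0 : ℝ≥0∞) < τ := by exact_mod_cast hτ
  set E : ℕ → Set P := fun n => {x | ENNReal.ofReal (n : ℝ) < (v x).abs} with hE
  have hEm : ∀ n, MeasurableSet (E n) := fun n => measurableSet_lt measurable_const hvm
  have hEanti : Antitone E := fun m n hmn x (hx : _ < _) =>
    lt_of_le_of_lt (ENNReal.ofReal_le_ofReal (by exact_mod_cast hmn)) hx
  have hE0 : μ (⋂ n, E n) = 0 := by
    have hfin := X.ae_lt_top hvm hvn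
    rw [ae_iff] at hfin
    refine measure_mono_null (fun x hx => ?_) hfin
    rw [mem_iInter] at hx
    show ¬ _ < _
    intro hlt
    obtain ⟨n, hn⟩ := ENNReal.exists_nat_gt hlt.ne
    have := hx n
    rw [hE, mem_ofPred_eq, ENNReal.ofReal_natCast] at this
    exact lt_asymm hn this
  obtain ⟨n, hn1, hn2⟩ := ((X.exists_indicator_lt hAC hgU.1 hgn hEm hEanti hE0 hτ').and
    (X.exists_indicator_lt hAC hvm hvn hEm hEanti hE0 hτ')).exists
  have hn0 : (0 : ℝ) ≤ n := by positivity
  refine ⟨fun x => (clampE (-n : ℝ) (n : ℝ) (v x)).toReal, ?_, ?_⟩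
  · refine approx_of_bounded hAC hdens hχ hΩ ?_ ?_ (M := n)
      (fun x => by simpa using abs_clamp_le hn0 (v x)) (fun x hx => ?_) x₀
    · exact (measurable_const.max (measurable_const.min hv.1)).ereal_toReal
    · refine lt_of_le_of_lt (X.newt_mono (fun x => ?_) fun x y => ?_) hv.2
      · have h := abs_clamp_sub_le hn0 (v x) 0
        simpa [clampE, EReal.abs_def, hn0] using h
      · rw [abs_coe_sub_coe]
        exact abs_clamp_sub_le hn0 _ _
    · simp [hvΩ x hx, clampE]
  · rw [X.newt_eq]
    refine lt_of_le_of_lt (add_le_add (b := (τ : ℝ≥0∞)) (d := X.cc * (X.cc * τ + X.cc * τ)) ?_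
      ((X.grad_triangle fun x y => abs_sub_clamp_sub_le hn0 (v x) (v y)).trans ?_))
      (lt_of_eq_of_lt (by ring) hτε)
    · refine (X.nrmE_mono fun x => ?_).trans hn2.le
      by_cases hx : x ∈ E n
      · rw [indicator_of_mem hx]
        exact abs_sub_clamp_le hn0 _
      · rw [abs_sub_clamp_eq_zero hn0 (not_lt.1 hx)]
        exact zero_le
    · gcongr
      · refine (X.grad_clampE hv.1 hgU hgn (EReal.coe_ne_top _) top_ne_bot).trans ?_
        gcongr
        refine (X.nrmE_mono fun x => ?_).trans hn1.le
        exact indicator_le_indicator_of_subset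
          (fun y hy => lt_abs_of_lt hn0 (Or.inl hy.1)) (fun _ => zero_le) x
      · refine (X.grad_clampE hv.1 hgU hgn bot_ne_top (EReal.coe_ne_bot _)).trans ?_
        gcongr
        refine (X.nrmE_mono fun x => ?_).trans hn1.le
        exact indicator_le_indicator_of_subset
          (fun y hy => lt_abs_of_lt hn0 (Or.inr hy.2)) (fun _ => zero_le) x

end

end QBFL

/-! ### Limits of functions vanishing outside `Ω` -/

lemma abs_le_abs_add_abs_sub (a b : EReal) : a.abs ≤ b.abs + (a - b).abs := by
  induction a with
  | bot => induction b <;> simp [sub_eq_add_neg]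
  | top => induction b <;> simp [sub_eq_add_neg]
  | coe a =>
    induction b with
    | bot => simp
    | top => simp
    | coe b =>
      rw [abs_coe_sub_coe, EReal.abs_def, EReal.abs_def,
        ← ENNReal.ofReal_add (abs_nonneg _) (abs_nonneg _)]
      refine ENNReal.ofReal_le_ofReal ?_
      have := abs_add_le b (a - b)
      rwa [add_sub_cancel] at this

lemma abs_sub_swap (a b : EReal) : (a - b).abs = (b - a).abs := by
  induction a with
  | bot => induction b <;> simp [sub_eq_add_neg]
  | top => induction b <;> simp [sub_eq_add_neg]
  | coe a =>
    induction b with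
    | bot => simp
    | top => simp
    | coe b => rw [abs_coe_sub_coe, abs_coe_sub_coe, abs_sub_comm]

/-- At a point where the errors are summable, the limit of functions vanishing outside `Ω` is
finite, and vanishes if the point lies outside `Ω`. -/
lemma sub_indicator_eq_zero {Ω : Set P} {u : P → EReal} {f : ℕ → P → ℝ}
    (hf : ∀ n, ∀ x ∉ Ω, f n x = 0) {x : P}
    (hx : ∑' n, (u x - (f n x : EReal)).abs ≠ ⊤) : u x - Ω.indicator u x = 0 := by
  have h1 : ∀ n, (u x - (f n x : EReal)).abs ≠ ⊤ := ENNReal.ne_top_of_tsum_ne_top hx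
  by_cases hxΩ : x ∈ Ω
  · rw [indicator_of_mem hxΩ]
    refine EReal.sub_self ?_ ?_
    · intro h
      exact h1 0 (by simp [h])
    · intro h
      exact h1 0 (by simp [h])
  · rw [indicator_of_notMem hxΩ, sub_zero]
    have h2 : ∀ n, (u x - (f n x : EReal)).abs = (u x).abs := fun n => by
      rw [hf n x hxΩ]
      simp
    simp only [h2] at hx
    by_contra hne
    exact hx (ENNReal.tsum_const_eq_top_of_ne_zero fun h => hne (EReal.abs_eq_zero_iff.1 h))

/-- Finiteness of `∑ |w n|` propagates along curves on which `∑ g n` is integrable. -/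
lemma tsum_abs_ne_top_of_curve [BorelSpace P] {w : ℕ → P → EReal} {g : ℕ → P → ℝ≥0∞}
    (hg : ∀ n, IsUpperGradient (w n) (g n)) {c : ℝ → P} (hc : LipschitzWith 1 c) {a b : ℝ}
    (hfin : ∫⁻ t in Icc a b, ∑' n, g n (c t) ≠ ⊤) {s t : ℝ} (hs : s ∈ Icc a b)
    (ht : t ∈ Icc a b) (h : ∑' n, (w n (c t)).abs ≠ ⊤) : ∑' n, (w n (c s)).abs ≠ ⊤ := by
  rw [lintegral_tsum fun n => (measurable_curve hc (hg n).1).aemeasurable] at hfin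
  refine ne_top_of_le_ne_top (ENNReal.add_ne_top.2 ⟨h, hfin⟩) ?_
  rw [← ENNReal.tsum_add]
  refine ENNReal.tsum_le_tsum fun n => (abs_le_abs_add_abs_sub _ (w n (c t))).trans ?_
  gcongr
  have hU := (isUpperGradient_iff.1 (hg n)).2 c hc
  rcases lt_trichotomy s t with hst | rfl | hst
  · exact (hU s t hst).trans (lintegral_Icc_mono (fun r => g n (c r)) hs.1 ht.2)
  · by_cases htop : (w n (c s)).abs = ⊤
    · exact absurd htop (ENNReal.ne_top_of_tsum_ne_top h n)
    · rw [EReal.sub_self (fun h => htop (by simp [h])) (fun h => htop (by simp [h]))]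
      simp
  · rw [abs_sub_swap]
    exact (hU t s hst).trans (lintegral_Icc_mono (fun r => g n (c r)) ht.1 hs.2)

namespace QBFL

/-- If `u` is a limit of functions vanishing outside `Ω`, then setting `u` to zero outside `Ω`
does not change its class. The limit vanishes outside `Ω` off the exceptional set `N` where a
rapidly convergent sequence of errors fails to be summable; `N` is null, and a curve along
which the sum of the upper gradients is integrable lies in `N` entirely if it meets `N`. -/
lemma newt_sub_indicator_eq_zero [BorelSpace P] {X : QBFL P μ} {Ω : Set P}
    {u : P → EReal} (hu : Measurable u)
    (h : ∀ ε : ℝ≥0∞, 0 < ε → ∃ f : P → ℝ, Measurable f ∧ (∀ x ∉ Ω, f x = 0) ∧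
      X.newt (fun x => u x - (f x : EReal)) < ε) :
    X.newt (fun x => u x - Ω.indicator u x) = 0 := by
  refine nonpos_iff_eq_zero.1 (le_of_forall_gt fun ε' hε' => ?_)
  obtain ⟨ε, hε, hεε, hε1⟩ : ∃ ε : ℝ≥0∞, 0 < ε ∧ ε ≤ ε' ∧ ε < ⊤ :=
    ⟨min ε' 1, lt_min hε' one_pos, min_le_left _ _, (min_le_right _ _).trans_lt one_lt_top⟩
  refine lt_of_lt_of_le ?_ hεε
  obtain ⟨d, hd, hsum⟩ := X.exists_weights hε
  choose f hfm hf0 hfn using fun n => h (d n) (by exact_mod_cast hd n)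
  choose g hgU hgn using fun n => X.exists_of_grad_lt ((X.grad_le_newt _).trans_lt (hfn n))
  set H : P → ℝ≥0∞ := fun x => ∑' n, (u x - (f n x : EReal)).abs with hH
  have hHm : Measurable H := Measurable.tsum fun n =>
    measurable_abs'.comp (hu.sub (hfm n).coe_real_ereal)
  have hHn : X.nrmE H < ⊤ := by
    refine lt_of_le_of_lt (X.nrmE_tsum _) (lt_of_le_of_lt ?_ (hsum.trans hε1))
    gcongr with n
    exact ((X.nrmE_le_newt _).trans_lt (hfn n)).le
  have hN := X.ae_lt_top hHm hHn
  have hNm : MeasurableSet {x | H x = ⊤} := hHm (measurableSet_singleton _)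
  -- the infinite value on the null set `N = {H = ⊤}` takes care of curves inside `N`
  have hU : IsUpperGradient (fun x => u x - Ω.indicator u x)
      (fun x => ∑' n, g n x + {x | H x = ⊤}.indicator (fun _ => ⊤) x) := by
    have hGm : Measurable fun x => ∑' n, g n x := Measurable.tsum fun n => (hgU n).1
    rw [isUpperGradient_iff]
    refine ⟨hGm.add (measurable_const.indicator hNm), fun c hc a b hab => ?_⟩
    by_cases htop : ∫⁻ t in Icc a b,
        (∑' n, g n (c t) + {x | H x = ⊤}.indicator (fun _ => ⊤) (c t)) = ⊤
    · rw [htop]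
      exact le_top
    have hfin : ∫⁻ t in Icc a b, ∑' n, g n (c t) ≠ ⊤ :=
      ne_top_of_le_ne_top htop (lintegral_mono fun t => le_self_add)
    obtain ⟨t, ht, hHt⟩ : ∃ t ∈ Icc a b, H (c t) ≠ ⊤ := by
      by_contra! hcon
      refine htop (top_le_iff.1 ?_)
      calc (⊤ : ℝ≥0∞) = ∫⁻ t in Icc a b, ⊤ := by
            rw [setLIntegral_const, Real.volume_Icc, ENNReal.top_mul]
            simpa using hab
        _ ≤ _ := by
            refine setLIntegral_mono' measurableSet_Icc fun t ht => ?_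
            rw [indicator_of_mem (show c t ∈ {x | H x = ⊤} from hcon t ht)]
            simp
    have hz : ∀ s ∈ Icc a b, u (c s) - Ω.indicator u (c s) = 0 := fun s hs =>
      sub_indicator_eq_zero hf0 (tsum_abs_ne_top_of_curve hgU hc hfin hs ht hHt)
    rw [hz a ⟨le_rfl, hab.le⟩, hz b ⟨hab.le, le_rfl⟩]
    simp
  have hzero : X.nrmE (fun x => (u x - Ω.indicator u x).abs) = 0 := by
    refine X.nrmE_null ?_
    filter_upwards [hN] with x hx
    rw [sub_indicator_eq_zero hf0 hx.ne]
    simp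
  rw [X.newt_eq, hzero, zero_add]
  refine lt_of_le_of_lt (X.grad_le hU) (lt_of_le_of_lt (X.nrmE_mono_ae
    (g := fun x => ∑' n, g n x) ?_) (lt_of_le_of_lt (X.nrmE_tsum _) (lt_of_le_of_lt ?_ hsum)))
  · filter_upwards [hN] with x hx
    rw [indicator_of_notMem (show x ∉ {x | H x = ⊤} from hx.ne), add_zero]
  · gcongr with n
    exact (hgn n).le

/-- Setting `u` to zero outside `Ω` stays in `N¹X` if the change is of zero norm. -/
lemma memN1_indicator [BorelSpace P] {X : QBFL P μ} {Ω : Set P} (hΩ : MeasurableSet Ω)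
    {u : P → EReal} (hu : X.memN1 u) (h : X.newt (fun x => u x - Ω.indicator u x) = 0) :
    X.memN1 (Ω.indicator u) := by
  refine ⟨hu.1.indicator hΩ, lt_of_le_of_lt (X.newt_triangle (w₁ := u)
    (w₂ := fun x => u x - Ω.indicator u x) (fun x => ?_) fun x y => ?_)
    (ENNReal.mul_lt_top X.cc_lt_top (ENNReal.add_lt_top.2 ⟨hu.2, by simp [h]⟩))⟩
  · refine le_trans ?_ le_self_add
    by_cases hx : x ∈ Ω <;> simp [hx]
  · have key : ∀ (p q : EReal) (p' q' : EReal), (p' = p ∨ p' = 0) → (q' = q ∨ q' = 0) →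
        (p' - q').abs ≤ (p - q).abs + ((p - p') - (q - q')).abs := by
      intro p q p' q' hp hq
      induction p with
      | bot => induction q <;> simp [sub_eq_add_neg]
      | top => induction q <;> simp [sub_eq_add_neg]
      | coe p =>
        induction q with
        | bot => simp
        | top => simp
        | coe q =>
          obtain ⟨p'', rfl⟩ : ∃ r : ℝ, p' = r := by
            rcases hp with rfl | rfl
            exacts [⟨p, rfl⟩, ⟨0, rfl⟩]
          obtain ⟨q'', rfl⟩ : ∃ r : ℝ, q' = r := by
            rcases hq with rfl | rfl
            exacts [⟨q, rfl⟩, ⟨0, rfl⟩]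
          simp only [← EReal.coe_sub, EReal.abs_def]
          rw [← ENNReal.ofReal_add (abs_nonneg _) (abs_nonneg _)]
          refine ENNReal.ofReal_le_ofReal ?_
          refine le_of_eq_of_le ?_ (abs_sub _ _)
          congr 1
          ring
    refine key _ _ _ _ ?_ ?_
    · by_cases hx : x ∈ Ω <;> simp [hx]
    · by_cases hy : y ∈ Ω <;> simp [hy]

/-- Functions at zero distance have the same approximations. -/
lemma approx_congr [BorelSpace P] {X : QBFL P μ} {Ω : Set P} {u v : P → EReal}
    (h : X.newt (fun x => u x - v x) = 0) (hv : X.Approx Ω v) : X.Approx Ω u := by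
  intro ε hε
  obtain ⟨δ, hδ, hδε⟩ := exists_small_mul (K := X.cc) X.cc_ne hε
  obtain ⟨f, hfL, hfc, hfΩ, hfn⟩ := hv δ (by exact_mod_cast hδ)
  refine ⟨f, hfL, hfc, hfΩ, lt_of_le_of_lt (X.newt_triangle (w₁ := fun x => u x - v x)
    (w₂ := fun x => v x - (f x : EReal)) (fun x => ?_) fun x y => ?_) ?_⟩
  · induction u x with
    | bot => induction v x <;> simp [sub_eq_add_neg]
    | top => induction v x <;> simp [sub_eq_add_neg]
    | coe p =>
      induction v x with
      | bot => simp
      | top => simp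
      | coe q =>
        simp only [← EReal.coe_sub, EReal.abs_def]
        rw [← ENNReal.ofReal_add (abs_nonneg _) (abs_nonneg _)]
        exact ENNReal.ofReal_le_ofReal (abs_sub_le _ _ _)
  · have hinf : ∀ (p q p' q' : EReal) (r s : ℝ), p' = ⊤ ∨ p' = ⊥ ∨ q' = ⊤ ∨ q' = ⊥ →
        ((p - (r : EReal)) - (q - (s : EReal))).abs ≤ ((p - p') - (q - q')).abs +
          ((p' - (r : EReal)) - (q' - (s : EReal))).abs := by
      intro p q p' q' r s hpq
      have : ((p' - (r : EReal)) - (q' - (s : EReal))).abs = ⊤ := by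
        rcases hpq with rfl | rfl | rfl | rfl
        · induction q' <;> simp [sub_eq_add_neg, ← EReal.coe_neg, ← EReal.coe_add]
        · simp [sub_eq_add_neg]
        · induction p' <;> simp [sub_eq_add_neg, ← EReal.coe_neg, ← EReal.coe_add]
        · induction p' <;> simp [sub_eq_add_neg, ← EReal.coe_neg, ← EReal.coe_add]
      rw [this, add_top]
      exact le_top
    by_cases hx : v x = ⊤ ∨ v x = ⊥ ∨ v y = ⊤ ∨ v y = ⊥
    · exact hinf _ _ _ _ _ _ hx
    · push Not at hx
      obtain ⟨h1, h2, h3, h4⟩ := hx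
      have e := ereal_split (u x) (u y) (v x).toReal (v y).toReal (f x) (f y)
      rw [EReal.coe_toReal h1 h2, EReal.coe_toReal h3 h4] at e
      refine e.trans (le_of_eq ?_)
      congr 1
      rw [← abs_coe_sub_coe, EReal.coe_sub, EReal.coe_sub, EReal.coe_toReal h1 h2,
        EReal.coe_toReal h3 h4]
  · rw [h, zero_add]
    exact lt_of_le_of_lt (by gcongr) hδε

end QBFL

/-- Let `P` be proper, `Ω ⊆ P` open, `‖·‖_X` absolutely continuous and
containing characteristic functions of sets of finite measure. If locally Lipschitz functions
are dense in `N¹X`, then the closure of `Lip_c(Ω)` in `N¹X` is `{u ∈ N¹X : u = 0 on P ∖ Ω}`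
(where, due to `‖·‖_{N¹X}` being merely a quasi-seminorm, membership of `u` in the right-hand
side is understood up to a function `v` with `‖u - v‖_{N¹X} = 0`). -/
theorem lipc_closure_eq_N0
    {P : Type*} [MetricSpace P] [MeasurableSpace P] [BorelSpace P] [ProperSpace P]
    (μ : MeasureTheory.Measure P) [SigmaFinite μ]
    (hball : ∀ (x : P) (r : ℝ), 0 < r → 0 < μ (Metric.ball x r) ∧ μ (Metric.ball x r) < ⊤)
    (X : QBFL P μ) (hAC : X.HasACNorm)
    (hsimple : ∀ E : Set P, MeasurableSet E → μ E < ⊤ → X.nrm (E.indicator 1) < ⊤)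
    (hdens : ∀ u : P → EReal, X.memN1 u → ∀ ε : ℝ≥0∞, 0 < ε →
      ∃ f : P → ℝ, LocallyLipschitz f ∧ X.newt (fun x => u x - (f x : EReal)) < ε)
    (Ω : Set P) (hΩ : IsOpen Ω) :
    ∀ u : P → EReal, X.memN1 u →
      ((∀ ε : ℝ≥0∞, 0 < ε →
          ∃ f : P → ℝ, (∃ K : ℝ≥0, LipschitzWith K f) ∧ HasCompactSupport f ∧
            tsupport f ⊆ Ω ∧ X.newt (fun x => u x - (f x : EReal)) < ε) ↔
        (∃ v : P → EReal, X.memN1 v ∧ (∀ x ∉ Ω, v x = 0) ∧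
          X.newt (fun x => u x - v x) = 0)) := by
  have : IsLocallyFiniteMeasure μ :=
    ⟨fun x => ⟨ball x 1, ball_mem_nhds x one_pos, (hball x 1 one_pos).2⟩⟩
  have hχ : ∀ A : Set P, MeasurableSet A → Bornology.IsBounded A →
      X.nrmE (A.indicator 1) < ⊤ := by
    intro A hA hAb
    have h := hsimple A hA (hAb.measure_lt_top)
    rw [X.nrm_eq] at h
    refine lt_of_le_of_lt (X.nrmE_mono fun x => ?_) h
    have h1 : (1 : EReal).abs = 1 := by
      rw [← EReal.coe_one, EReal.abs_def]
      simp
    by_cases hx : x ∈ A <;> simp [hx, h1]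
  intro u hu
  constructor
  · intro h
    have hz : X.newt (fun x => u x - Ω.indicator u x) = 0 := by
      refine QBFL.newt_sub_indicator_eq_zero hu.1 fun ε hε => ?_
      obtain ⟨f, ⟨K, hK⟩, -, hfΩ, hfn⟩ := h ε hε
      exact ⟨f, hK.continuous.measurable,
        fun x hx => image_eq_zero_of_notMem_tsupport fun hxt => hx (hfΩ hxt), hfn⟩
    exact ⟨Ω.indicator u, QBFL.memN1_indicator hΩ.measurableSet hu hz,
      fun x hx => indicator_of_notMem hx u, hz⟩
  · rintro ⟨v, hv, hvΩ, huv⟩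
    refine QBFL.approx_congr huv ?_
    rcases isEmpty_or_nonempty P with hP | ⟨⟨x₀⟩⟩
    · refine fun ε hε => ⟨0, ⟨0, LipschitzWith.const 0⟩, HasCompactSupport.zero, ?_, ?_⟩
      · exact fun x => isEmptyElim x
      · rw [show (fun x => v x - ((0 : P → ℝ) x : EReal)) = fun _ => 0 from
          funext fun x => isEmptyElim x, X.newt_zero]
        exact hε
    · exact QBFL.approx_of_memN1 hAC hdens hχ hΩ hv hvΩ x₀

end
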